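/- arXiv:1207.6785 — 4 statements merged into one kernel-verified Lean document; each statement's English description precedes it below -/
import Mathlib

section
/- There is an absolute constant c > 0 such that for every finite set A ⊆ ℂ with 0 ∉ A and |A| ≥ 2, one has |A + A| + |A : A| ≥ c·|A|^{4/3}. -/
open scoped Pointwise Classical

/-!
The proof adapts Solymosi's slope argument to `ℂ`, replacing consecutive slopes by nearest
neighbours.

Restricting to one of the four quadrants costs a constant factor and makes `Re (x * conj y) ≥ 0`
for all `x, y ∈ A`, so `‖y‖ ≤ ‖x + y‖`. Sort `A × A` by the slope `b / a ∈ A / A`, and call a slope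
rich if its line carries at least half of the average number `|A|² / |A / A|` of points; the rich
slopes carry at least half of `A × A`. To each rich slope `z` attach a nearest other rich slope
`z'`. Adding a point `(x, z x)` to a point `(y, z' y)` gives a point of `(A + A) × (A + A)` of slope
`p = z + (z' - z) y / (x + y)`, hence `‖z - p‖ ≤ ‖z - z'‖`. A packing argument (`packing_bound`)
shows that a given `p` lies that close to only `K` rich slopes `z`, and `z` together with the sum
determines `x` and `y`. Counting sums gives `|A|⁴ ≤ 4 K |A + A|² |A / A|` (`quadrant_bound`), from
which the exponent `4 / 3` follows.
-/

/-- Two distinct points that are at least as far from each other as from `p` are seen from `p` in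
directions at distance at least `1` (an angle of at least 60 degrees). If one of the points is `p`,
its direction is the junk value `0`, and the conclusion still holds. -/
lemma one_le_dist_directions {p z w : ℂ} (hzw : z ≠ w) (hz : ‖z - p‖ ≤ ‖z - w‖)
    (hw : ‖w - p‖ ≤ ‖z - w‖) :
    1 ≤ ‖(‖z - p‖⁻¹ : ℝ) • (z - p) - (‖w - p‖⁻¹ : ℝ) • (w - p)‖ := by
  by_cases h1 : z - p = 0
  · have h2 : w - p ≠ 0 := fun h2 => hzw ((sub_eq_zero.1 h1).trans (sub_eq_zero.1 h2).symm)
    have h3 : ‖w - p‖ ≠ 0 := norm_ne_zero_iff.2 h2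
    rw [h1, smul_zero, zero_sub, norm_neg, norm_smul, norm_inv, norm_norm, inv_mul_cancel₀ h3]
  by_cases h2 : w - p = 0
  · have h3 : ‖z - p‖ ≠ 0 := norm_ne_zero_iff.2 h1
    rw [h2, smul_zero, sub_zero, norm_smul, norm_inv, norm_norm, inv_mul_cancel₀ h3]
  have ha : 0 < ‖z - p‖ := norm_pos_iff.2 h1
  have hb : 0 < ‖w - p‖ := norm_pos_iff.2 h2
  have e : z - w = (z - p) - (w - p) := by ring
  rw [e] at hz hw
  generalize z - p = x at *
  generalize w - p = y at *
  have e1 := norm_sub_sq_real x y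
  have e2 := norm_sub_sq_real ((‖x‖⁻¹ : ℝ) • x) ((‖y‖⁻¹ : ℝ) • y)
  rw [real_inner_smul_left, real_inner_smul_right, norm_smul, norm_smul, norm_inv, norm_inv,
    norm_norm, norm_norm, inv_mul_cancel₀ ha.ne', inv_mul_cancel₀ hb.ne'] at e2
  set i := inner ℝ x y
  have key : 2 * i ≤ ‖x‖ * ‖y‖ := by
    rcases le_total ‖x‖ ‖y‖ with h | h
    · nlinarith [mul_self_le_mul_self hb.le hw]
    · nlinarith [mul_self_le_mul_self ha.le hz]
  have key2 : 2 * (‖x‖⁻¹ * (‖y‖⁻¹ * i)) ≤ 1 := by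
    have : 2 * (‖x‖⁻¹ * (‖y‖⁻¹ * i)) = (2 * i) / (‖x‖ * ‖y‖) := by field_simp
    rw [this, div_le_one (by positivity)]
    exact key
  by_contra! hlt
  nlinarith [norm_nonneg ((‖x‖⁻¹ : ℝ) • x - (‖y‖⁻¹ : ℝ) • y)]

/-- At most `K` points can be pairwise at least as far from each other as from `p`: cover the unit
ball by finitely many balls of radius `1 / 2`; no two of the points have directions from `p` in the
same one. -/
lemma packing_bound : ∃ K : ℕ, ∀ (R : Finset ℂ) (p : ℂ),
    (∀ z ∈ R, ∀ w ∈ R, z ≠ w → ‖z - p‖ ≤ ‖z - w‖) → R.card ≤ K := by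
  obtain ⟨t, ht, hcov⟩ := Metric.totallyBounded_iff.1
    (isCompact_closedBall (0 : ℂ) 1).totallyBounded (1 / 2) (by norm_num)
  refine ⟨ht.toFinset.card, fun R p hR => ?_⟩
  have hc : ∀ z : ℂ, ∃ c ∈ t, ‖(‖z - p‖⁻¹ : ℝ) • (z - p) - c‖ < 1 / 2 := by
    intro z
    have hm : (‖z - p‖⁻¹ : ℝ) • (z - p) ∈ Metric.closedBall (0 : ℂ) 1 := by
      rw [mem_closedBall_zero_iff, norm_smul, norm_inv, norm_norm]
      exact inv_mul_le_one
    obtain ⟨c, hct, hc⟩ := Set.mem_iUnion₂.1 (hcov hm)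
    exact ⟨c, hct, by simpa [dist_eq_norm] using hc⟩
  choose c hct hc using hc
  refine Finset.card_le_card_of_injOn c (fun z _ => by simpa using hct z) ?_
  intro z hz w hw hzw
  by_contra hne
  have h1 := one_le_dist_directions hne (hR z hz w hw hne)
    (by rw [norm_sub_rev z w]; exact hR w hw z hz (Ne.symm hne))
  have h2 := hc z
  have h3 := hc w
  rw [← hzw, norm_sub_rev] at h3
  have h4 := norm_sub_le_norm_sub_add_norm_sub ((‖z - p‖⁻¹ : ℝ) • (z - p)) (c z)
    ((‖w - p‖⁻¹ : ℝ) • (w - p))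
  linarith

/-- The points of `A × A` on the line of slope `z` through the origin. -/
noncomputable def slopeFiber (A : Finset ℂ) (z : ℂ) : Finset (ℂ × ℂ) :=
  (A ×ˢ A).filter fun q => q.2 / q.1 = z

lemma mem_slopeFiber {A : Finset ℂ} (h0 : (0 : ℂ) ∉ A) {z : ℂ} {q : ℂ × ℂ}
    (h : q ∈ slopeFiber A z) : q.1 ∈ A ∧ q.2 ∈ A ∧ q.2 = z * q.1 ∧ q.1 ≠ 0 := by
  simp only [slopeFiber, Finset.mem_filter, Finset.mem_product] at h
  obtain ⟨⟨h1, h2⟩, h3⟩ := h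
  have h4 : q.1 ≠ 0 := fun h => h0 (h ▸ h1)
  exact ⟨h1, h2, (div_eq_iff h4).1 h3, h4⟩

lemma card_slopeFiber_le {A : Finset ℂ} (h0 : (0 : ℂ) ∉ A) (z : ℂ) :
    (slopeFiber A z).card ≤ A.card := by
  refine Finset.card_le_card_of_injOn Prod.fst (fun q hq => (mem_slopeFiber h0 hq).1) ?_
  intro q hq r hr h
  have h1 := (mem_slopeFiber h0 hq).2.2.1
  have h2 := (mem_slopeFiber h0 hr).2.2.1
  exact Prod.ext h (by rw [h1, h2, h])

/-- Sums of a point on the line of slope `z` and a point on the line of the nearest neighbour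
`f z` cover each point of `(A + A) × (A + A)` at most `K` times. -/
lemma sum_fiber_mul_le {K : ℕ} (hK : ∀ (R : Finset ℂ) (p : ℂ),
      (∀ z ∈ R, ∀ w ∈ R, z ≠ w → ‖z - p‖ ≤ ‖z - w‖) → R.card ≤ K)
    {A : Finset ℂ} (h0 : (0 : ℂ) ∉ A) (hA : ∀ x ∈ A, ∀ y ∈ A, ‖y‖ ≤ ‖x + y‖)
    (R : Finset ℂ) (f : ℂ → ℂ) (hf : ∀ z ∈ R, f z ≠ z)
    (hmin : ∀ z ∈ R, ∀ w ∈ R, z ≠ w → ‖z - f z‖ ≤ ‖z - w‖) :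
    ∑ z ∈ R, (slopeFiber A z).card * (slopeFiber A (f z)).card ≤ K * (A + A).card ^ 2 := by
  set T : Finset (Σ _ : ℂ, (ℂ × ℂ) × (ℂ × ℂ)) :=
    R.sigma fun z => slopeFiber A z ×ˢ slopeFiber A (f z) with hT
  have hTc : T.card = ∑ z ∈ R, (slopeFiber A z).card * (slopeFiber A (f z)).card := by
    rw [hT, Finset.card_sigma]
    exact Finset.sum_congr rfl fun z _ => Finset.card_product _ _
  have hTm : ∀ q ∈ T, q.1 ∈ R ∧ q.2.1 ∈ slopeFiber A q.1 ∧ q.2.2 ∈ slopeFiber A (f q.1) := by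
    intro q hq
    simpa [hT] using hq
  rw [← hTc, pow_two, ← Finset.card_product]
  refine Finset.card_le_mul_card_image_of_maps_to (f := fun q => q.2.1 + q.2.2) ?_ K ?_
  · intro q hq
    obtain ⟨-, h1, h2⟩ := hTm q hq
    have h1 := mem_slopeFiber h0 h1
    have h2 := mem_slopeFiber h0 h2
    exact Finset.mem_product.2 ⟨Finset.add_mem_add h1.1 h2.1, Finset.add_mem_add h1.2.1 h2.2.1⟩
  · rintro ⟨s, t⟩ -
    set F := T.filter fun q => q.2.1 + q.2.2 = (s, t) with hF
    have hFm : ∀ q ∈ F, q.1 ∈ R ∧ q.2.1 ∈ slopeFiber A q.1 ∧ q.2.2 ∈ slopeFiber A (f q.1) ∧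
        q.2.1.1 + q.2.2.1 = s ∧ q.1 * q.2.1.1 + f q.1 * q.2.2.1 = t := by
      intro q hq
      obtain ⟨hq, he⟩ := Finset.mem_filter.1 hq
      obtain ⟨h1, h2, h3⟩ := hTm q hq
      refine ⟨h1, h2, h3, congrArg Prod.fst he, ?_⟩
      rw [← (mem_slopeFiber h0 h2).2.2.1, ← (mem_slopeFiber h0 h3).2.2.1]
      exact congrArg Prod.snd he
    -- The slope `z` and the sum determine both summands, as `z ≠ f z`.
    have hinj : Set.InjOn (fun q : (Σ _ : ℂ, (ℂ × ℂ) × (ℂ × ℂ)) => q.1) F := by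
      rintro ⟨z, ⟨x, x'⟩, ⟨y, y'⟩⟩ hq ⟨w, ⟨u, u'⟩, ⟨v, v'⟩⟩ hr h
      obtain rfl : z = w := h
      obtain ⟨hz, h1, h2, h3, h4⟩ := hFm _ hq
      obtain ⟨-, g1, g2, g3, g4⟩ := hFm _ hr
      have ex := (mem_slopeFiber h0 h1).2.2.1
      have ey := (mem_slopeFiber h0 h2).2.2.1
      have eu := (mem_slopeFiber h0 g1).2.2.1
      have ev := (mem_slopeFiber h0 g2).2.2.1
      simp only at ex ey eu ev h3 h4 g3 g4 hz
      have hy : y = v := by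
        have : (f z - z) * (y - v) = 0 := by linear_combination h4 - g4 - z * (h3 - g3)
        exact sub_eq_zero.1 ((mul_eq_zero.1 this).resolve_left (sub_ne_zero.2 (hf z hz)))
      have hx : x = u := by linear_combination h3 - g3 - hy
      subst hy hx
      rw [ex, ey, eu, ev]
    rw [← Finset.card_image_of_injOn hinj]
    refine hK _ (t / s) ?_
    intro z hz w hw hne
    obtain ⟨q, hq, rfl⟩ := Finset.mem_image.1 hz
    obtain ⟨r, hr, rfl⟩ := Finset.mem_image.1 hw
    obtain ⟨hz, h1, h2, h3, h4⟩ := hFm _ hq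
    have hr := (hFm _ hr).1
    have h1 := mem_slopeFiber h0 h1
    have h2 := mem_slopeFiber h0 h2
    have hle := hA _ h1.1 _ h2.1
    have hy : 0 < ‖q.2.2.1‖ := norm_pos_iff.2 h2.2.2.2
    rw [h3] at hle
    have hs0 : 0 < ‖s‖ := hy.trans_le hle
    have hs : s ≠ 0 := norm_pos_iff.1 hs0
    have e : q.1 - t / s = (q.1 - f q.1) * (q.2.2.1 / s) := by
      field_simp
      rw [← h4, ← h3]
      ring
    refine le_trans ?_ (hmin _ hz _ hr hne)
    rw [e, norm_mul, norm_div]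
    exact mul_le_of_le_one_right (norm_nonneg _) ((div_le_one hs0).2 hle)

/-- Solymosi's inequality for a set on which adding an element never decreases the norm, as is the
case inside a quadrant. -/
lemma quadrant_bound {K : ℕ} (hK : ∀ (R : Finset ℂ) (p : ℂ),
      (∀ z ∈ R, ∀ w ∈ R, z ≠ w → ‖z - p‖ ≤ ‖z - w‖) → R.card ≤ K)
    {A : Finset ℂ} (h0 : (0 : ℂ) ∉ A) (hA : ∀ x ∈ A, ∀ y ∈ A, ‖y‖ ≤ ‖x + y‖)
    (h3 : 3 ≤ A.card) :
    A.card ^ 4 ≤ 4 * K * (A + A).card ^ 2 * (A / A).card := by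
  set n : ℂ → ℕ := fun z => (slopeFiber A z).card with hn
  set D := (A / A).card with hD
  have hsum : A.card ^ 2 = ∑ z ∈ A / A, n z := by
    rw [pow_two, ← Finset.card_product]
    exact Finset.card_eq_sum_card_fiberwise fun q hq => by
      have hq := Finset.mem_product.1 hq
      exact Finset.div_mem_div hq.2 hq.1
  have hne : A.Nonempty := Finset.card_pos.1 (by omega)
  have hDpos : 0 < D := Finset.card_pos.2 (hne.div hne)
  set R := (A / A).filter fun z => A.card ^ 2 ≤ 2 * D * n z with hR
  have hrich : A.card ^ 2 ≤ 2 * ∑ z ∈ R, n z := by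
    have hsplit := Finset.sum_filter_add_sum_filter_not (A / A)
      (fun z => A.card ^ 2 ≤ 2 * D * n z) n
    rw [← hsum, ← hR] at hsplit
    set P := ∑ z ∈ (A / A).filter (fun z => ¬ A.card ^ 2 ≤ 2 * D * n z), n z with hP
    have hpoor : D * (2 * P) ≤ D * A.card ^ 2 := by
      calc D * (2 * P) = ∑ z ∈ (A / A).filter (fun z => ¬ A.card ^ 2 ≤ 2 * D * n z),
              2 * D * n z := by rw [← Finset.mul_sum]; ring
        _ ≤ ∑ z ∈ (A / A).filter (fun z => ¬ A.card ^ 2 ≤ 2 * D * n z), A.card ^ 2 :=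
            Finset.sum_le_sum fun z hz => (not_le.1 (Finset.mem_filter.1 hz).2).le
        _ ≤ D * A.card ^ 2 := by
            rw [Finset.sum_const, smul_eq_mul]
            exact Nat.mul_le_mul_right _ (Finset.card_filter_le _ _)
    have := Nat.le_of_mul_le_mul_left hpoor hDpos
    omega
  -- A single line holds at most `|A|` points, too few to be half of `A × A` when `|A| ≥ 3`.
  have hR2 : 1 < R.card := by
    by_contra! h
    have h1 : ∑ z ∈ R, n z ≤ R.card * A.card :=
      Finset.sum_le_card_nsmul _ _ _ fun z _ => card_slopeFiber_le h0 z
    have h2 : R.card * A.card ≤ 1 * A.card := Nat.mul_le_mul_right _ h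
    nlinarith
  have hnear : ∀ z : ℂ, ∃ w, z ∈ R →
      w ∈ R ∧ w ≠ z ∧ ∀ v ∈ R, z ≠ v → ‖z - w‖ ≤ ‖z - v‖ := by
    intro z
    by_cases hz : z ∈ R
    · have : (R.erase z).Nonempty := Finset.card_pos.1 (by rw [Finset.card_erase_of_mem hz]; omega)
      obtain ⟨w, hw, hmin⟩ := Finset.exists_min_image (R.erase z) (fun w => ‖z - w‖) this
      obtain ⟨hw1, hw2⟩ := Finset.mem_erase.1 hw
      exact ⟨w, fun _ => ⟨hw2, hw1, fun v hv hzv => hmin v (Finset.mem_erase.2 ⟨hzv.symm, hv⟩)⟩⟩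
    · exact ⟨0, fun h => absurd h hz⟩
  choose f hf using hnear
  have hmain := sum_fiber_mul_le hK h0 hA R f (fun z hz => (hf z hz).2.1)
    (fun z hz => (hf z hz).2.2)
  have hlow : A.card ^ 2 * ∑ z ∈ R, n z ≤ 2 * D * ∑ z ∈ R, n z * n (f z) := by
    rw [Finset.mul_sum, Finset.mul_sum]
    refine Finset.sum_le_sum fun z hz => ?_
    have := (Finset.mem_filter.1 (hf z hz).1).2
    calc A.card ^ 2 * n z ≤ (2 * D * n (f z)) * n z := Nat.mul_le_mul_right _ this
      _ = 2 * D * (n z * n (f z)) := by ring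
  calc A.card ^ 4 = A.card ^ 2 * A.card ^ 2 := by ring
    _ ≤ A.card ^ 2 * (2 * ∑ z ∈ R, n z) := Nat.mul_le_mul_left _ hrich
    _ = 2 * (A.card ^ 2 * ∑ z ∈ R, n z) := by ring
    _ ≤ 2 * (2 * D * ∑ z ∈ R, n z * n (f z)) := Nat.mul_le_mul_left _ hlow
    _ ≤ 2 * (2 * D * (K * (A + A).card ^ 2)) :=
        Nat.mul_le_mul_left _ (Nat.mul_le_mul_left _ hmain)
    _ = 4 * K * (A + A).card ^ 2 * D := by ring

/-- One of the four (half-open) quadrants contains at least a quarter of `A`. -/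
lemma exists_quadrant (A : Finset ℂ) : ∃ B ⊆ A, A.card ≤ 4 * B.card ∧
    ∀ x ∈ B, ∀ y ∈ B, ‖y‖ ≤ ‖x + y‖ := by
  obtain ⟨b, -, hb⟩ := Finset.exists_le_of_sum_le (s := (Finset.univ : Finset (Bool × Bool)))
    (f := fun _ => A.card)
    (g := fun b => 4 * (A.filter fun z => (decide (0 ≤ z.re), decide (0 ≤ z.im)) = b).card)
    Finset.univ_nonempty (by
      rw [← Finset.mul_sum, ← Finset.card_eq_sum_card_fiberwise fun _ _ => Finset.mem_univ _]
      simp)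
  refine ⟨_, Finset.filter_subset _ A, hb, ?_⟩
  intro x hx y hy
  have hxy := (Finset.mem_filter.1 hx).2.trans (Finset.mem_filter.1 hy).2.symm
  simp only [Prod.mk.injEq, decide_eq_decide] at hxy
  have h1 : 0 ≤ x.re * y.re := by
    by_cases h : 0 ≤ x.re
    · exact mul_nonneg h (hxy.1.1 h)
    · exact mul_nonneg_of_nonpos_of_nonpos (not_le.1 h).le
        (not_le.1 fun h' => h (hxy.1.2 h')).le
  have h2 : 0 ≤ x.im * y.im := by
    by_cases h : 0 ≤ x.im
    · exact mul_nonneg h (hxy.2.1 h)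
    · exact mul_nonneg_of_nonpos_of_nonpos (not_le.1 h).le
        (not_le.1 fun h' => h (hxy.2.2 h')).le
  refine le_of_sq_le_sq ?_ (norm_nonneg _)
  rw [Complex.sq_norm, Complex.sq_norm, Complex.normSq_apply, Complex.normSq_apply,
    Complex.add_re, Complex.add_im]
  nlinarith [mul_self_nonneg x.re, mul_self_nonneg x.im]

theorem sum_ratio_bound :
    ∃ c : ℝ, 0 < c ∧ ∀ A : Finset ℂ, (0 : ℂ) ∉ A → 2 ≤ A.card →
      c * (A.card : ℝ) ^ ((4 : ℝ) / 3) ≤ ((A + A).card : ℝ) + ((A / A).card : ℝ) := by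
  obtain ⟨K, hK⟩ := packing_bound
  -- `1024 = 4 * 4 ^ 4` comes from `quadrant_bound` and the loss in `exists_quadrant`;
  -- `4096 = 8 ^ 4` covers the sets with at most `8` elements.
  set M : ℝ := 1024 * K + 4096 with hM
  have hMpos : 0 < M := by positivity
  refine ⟨(M⁻¹) ^ ((1 : ℝ) / 3), by positivity, fun A h0 h2 => ?_⟩
  set S : ℝ := ((A + A).card : ℝ) + ((A / A).card : ℝ) with hS
  have hne : A.Nonempty := Finset.card_pos.1 (by omega)
  have hS1 : 1 ≤ S := by
    have : 1 ≤ (A + A).card := Finset.card_pos.2 (hne.add hne)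
    have : (1 : ℝ) ≤ (A + A).card := by exact_mod_cast this
    have : (0 : ℝ) ≤ (A / A).card := by positivity
    linarith
  have hcube : (A.card : ℝ) ^ 4 ≤ M * S ^ 3 := by
    obtain ⟨B, hBA, hcard, hB⟩ := exists_quadrant A
    have hcard' : (A.card : ℝ) ≤ 4 * B.card := by exact_mod_cast hcard
    have hS3 : 1 ≤ S ^ 3 := one_le_pow₀ hS1
    have hK0 : (0 : ℝ) ≤ K := by positivity
    by_cases h3 : 3 ≤ B.card
    · have hq := quadrant_bound hK (fun h => h0 (hBA h)) hB h3
      have hq' : (B.card : ℝ) ^ 4 ≤ 4 * K * ((B + B).card : ℝ) ^ 2 * (B / B).card := by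
        exact_mod_cast hq
      have hadd : ((B + B).card : ℝ) ≤ S := by
        have : (B + B).card ≤ (A + A).card := Finset.card_le_card (Finset.add_subset_add hBA hBA)
        have : ((B + B).card : ℝ) ≤ (A + A).card := by exact_mod_cast this
        have : (0 : ℝ) ≤ (A / A).card := by positivity
        linarith
      have hdiv : ((B / B).card : ℝ) ≤ S := by
        have : (B / B).card ≤ (A / A).card := Finset.card_le_card (Finset.div_subset_div hBA hBA)
        have : ((B / B).card : ℝ) ≤ (A / A).card := by exact_mod_cast this
        have : (0 : ℝ) ≤ (A + A).card := by positivity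
        linarith
      calc (A.card : ℝ) ^ 4 ≤ (4 * B.card) ^ 4 := by gcongr
        _ = 256 * (B.card : ℝ) ^ 4 := by ring
        _ ≤ 256 * (4 * K * ((B + B).card : ℝ) ^ 2 * (B / B).card) := by gcongr
        _ ≤ 256 * (4 * K * S ^ 2 * S) := by gcongr
        _ ≤ M * S ^ 3 := by rw [hM]; nlinarith
    · have h8 : (A.card : ℝ) ≤ 8 := by
        have : A.card ≤ 8 := by omega
        exact_mod_cast this
      calc (A.card : ℝ) ^ 4 ≤ 8 ^ 4 := by gcongr
        _ ≤ M * S ^ 3 := by rw [hM]; nlinarith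
  have hle : M⁻¹ * (A.card : ℝ) ^ 4 ≤ S ^ 3 := by
    rw [inv_mul_le_iff₀ hMpos]
    exact hcube
  have hroot := Real.rpow_le_rpow (by positivity) hle (by norm_num : (0 : ℝ) ≤ 1 / 3)
  rw [Real.mul_rpow (by positivity) (by positivity), ← Real.rpow_natCast, ← Real.rpow_natCast,
    ← Real.rpow_mul (by positivity), ← Real.rpow_mul (by positivity)] at hroot
  norm_num at hroot ⊢
  exact hroot
end

section
/- There is an absolute constant c > 0 such that for every finite set A ⊆ ℂ with 0 ∉ A and |A| ≥ 2, one has |A + A| + |A·A| ≥ c·|A|^{4/3}/(log |A|)^{1/3}. -/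
/-!
Solymosi's argument, carried over to the complex plane by replacing "consecutive slopes" with
"nearest neighbouring slopes".

Pass to the part of `A` in one quadrant, which keeps a quarter of the elements. Its
multiplicative energy is at most `∑ r(l)²`, where `r(l)` is the number of points of `A × A` on the
line `y = l x`. Let `L` be a set of at least two slopes with `r ≥ t`, and for `l ∈ L` let `l'` be a
nearest other element of `L`. Adding the points of `A × A` on the line of slope `l` to those on
the line of slope `l'` gives at least `t²` distinct elements of `(A + A) × (A + A)`. The sum of
`(x, l x)` and `(y, l' y)` has slope `p = l + (l' - l) y / (x + y)`, and `|y| ≤ |x + y|` since `x`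
and `y` share a quadrant, so `0 < |p - l| ≤ |l' - l|`. The nearest neighbour property forces two
slopes `l` that serve the same `p` to lie in different octants around `p`
(`card_le_eight_of_separated`). Each element of `(A + A) × (A + A)` is thus obtained from at most
eight `l`, and `|L| t² ≤ 8 |A + A|²` (`card_slopes_mul_sq_le`).

Summing over `t` gives energy at most `16 |A + A|² (1 + log |A|)`, and the Cauchy–Schwarz lower
bound `|A|⁴ / |A A|` for the energy finishes the proof.
-/

open scoped Pointwise Classical

/-! ### Plane geometry -/

/-- The octant of the plane containing `u`, encoded by the signs of its coordinates and a
comparison of their absolute values. -/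
noncomputable def octant (u : ℂ) : Bool × Bool × Bool :=
  (decide (0 ≤ u.re), decide (0 ≤ u.im), decide (|u.re| ≤ |u.im|))

lemma octant_ineq {a b c d : ℝ} (hb : 0 ≤ b) (hab : b ≤ a) (hd : 0 ≤ d) (hcd : d ≤ c)
    (hc : 0 < c) (h : c ^ 2 + d ^ 2 ≤ a ^ 2 + b ^ 2) :
    c ^ 2 + d ^ 2 < 2 * (a * c + b * d) := by
  by_contra! hcon
  have ha : 0 ≤ a := hb.trans hab
  have hbd : 0 ≤ b * d := mul_nonneg hb hd
  by_cases hac : c ≤ a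
  · have h1 : c * c ≤ a * c := mul_le_mul_of_nonneg_right hac hc.le
    have h2 : d = c := by
      by_contra hne
      have : d < c := lt_of_le_of_ne hcd hne
      nlinarith
    subst h2
    have h3 : a = d := by
      by_contra hne
      have : d < a := lt_of_le_of_ne hac (Ne.symm hne)
      nlinarith
    subst h3
    nlinarith
  · push Not at hac
    -- here `a < c`, so the norm comparison forces `d < b`
    have hdb : d < b := by
      by_contra! h'
      nlinarith
    nlinarith [mul_nonneg hb hd, mul_self_nonneg (c - d), mul_self_nonneg (a - b)]

/-- Two vectors in a common octant make an angle below `60°`, so they are closer to each other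
than the longer of them is to the origin. -/
lemma normSq_sub_lt_of_octant {u v : ℂ} (hv : v ≠ 0) (ho : octant u = octant v)
    (h : Complex.normSq v ≤ Complex.normSq u) :
    Complex.normSq (u - v) < Complex.normSq u := by
  have hpos : 0 < |v.re| ∨ 0 < |v.im| := by
    by_contra! hcon
    exact hv (Complex.ext (abs_nonpos_iff.1 hcon.1) (abs_nonpos_iff.1 hcon.2))
  simp only [octant, Prod.mk.injEq, decide_eq_decide] at ho
  obtain ⟨h1, h2, h3⟩ := ho
  have key : ∀ {x y : ℝ}, (0 ≤ x ↔ 0 ≤ y) → x * y = |x| * |y| := by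
    intro x y hxy
    by_cases hx : 0 ≤ x
    · rw [abs_of_nonneg hx, abs_of_nonneg (hxy.1 hx)]
    · have hy : ¬ 0 ≤ y := fun hy => hx (hxy.2 hy)
      push Not at hx hy
      rw [abs_of_neg hx, abs_of_neg hy]; ring
  have k1 := key h1
  have k2 := key h2
  simp only [Complex.normSq_apply, Complex.sub_re, Complex.sub_im] at h ⊢
  have e1 := abs_mul_abs_self u.re
  have e2 := abs_mul_abs_self u.im
  have e3 := abs_mul_abs_self v.re
  have e4 := abs_mul_abs_self v.im
  by_cases hc : |u.re| ≤ |u.im|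
  · have hc' := h3.1 hc
    have := octant_ineq (abs_nonneg u.re) hc (abs_nonneg v.re) hc'
      (by rcases hpos with h | h <;> linarith) (by nlinarith)
    nlinarith
  · have hc' : ¬ |v.re| ≤ |v.im| := fun h => hc (h3.2 h)
    push Not at hc hc'
    have := octant_ineq (abs_nonneg u.im) hc.le (abs_nonneg v.im) hc'.le
      (by rcases hpos with h | h <;> linarith) (by nlinarith)
    nlinarith

/-- A point other than the centres lies in at most eight discs none of which contains the centre
of another disc in its interior. -/
lemma card_le_eight_of_separated (M : Finset ℂ) (p : ℂ) (r : ℂ → ℝ)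
    (hp : ∀ l ∈ M, l ≠ p) (hr : ∀ l ∈ M, Complex.normSq (l - p) ≤ r l)
    (hsep : ∀ l ∈ M, ∀ m ∈ M, l ≠ m → r l ≤ Complex.normSq (l - m)) : M.card ≤ 8 := by
  have : M.card ≤ (Finset.univ : Finset (Bool × Bool × Bool)).card := by
    refine Finset.card_le_card_of_injOn (fun l => octant (l - p)) (fun _ _ => by simp) ?_
    -- of two centres in one octant around `p`, the farther one gives a contradiction
    have main : ∀ l ∈ M, ∀ m ∈ M, octant (l - p) = octant (m - p) →
        Complex.normSq (m - p) ≤ Complex.normSq (l - p) → l = m := by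
      intro l hl m hm ho hle
      by_contra hne
      have h1 := normSq_sub_lt_of_octant (sub_ne_zero.2 (hp m hm)) ho hle
      rw [sub_sub_sub_cancel_right] at h1
      linarith [hr l hl, hsep l hl m hm hne]
    intro l hl m hm ho
    rcases le_total (Complex.normSq (m - p)) (Complex.normSq (l - p)) with h | h
    · exact main l hl m hm ho h
    · exact (main m hm l hl ho.symm h).symm
  simpa using this

/-- Products of real parts, and products of imaginary parts, of elements of `A` are nonnegative.
This holds in particular for subsets of a closed quadrant. -/
def SameQuadrant (A : Finset ℂ) : Prop :=
  ∀ x ∈ A, ∀ y ∈ A, 0 ≤ x.re * y.re ∧ 0 ≤ x.im * y.im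

lemma SameQuadrant.normSq_le {A : Finset ℂ} (hA : SameQuadrant A) {x y : ℂ} (hx : x ∈ A)
    (hy : y ∈ A) : Complex.normSq y ≤ Complex.normSq (x + y) := by
  obtain ⟨h1, h2⟩ := hA x hx y hy
  simp only [Complex.normSq_apply, Complex.add_re, Complex.add_im]
  nlinarith [mul_self_nonneg x.re, mul_self_nonneg x.im]

lemma exists_sameQuadrant (A : Finset ℂ) :
    ∃ B ⊆ A, SameQuadrant B ∧ A.card ≤ 4 * B.card := by
  let f : ℂ → Bool × Bool := fun u => (decide (0 ≤ u.re), decide (0 ≤ u.im))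
  obtain ⟨q, hq⟩ : ∃ q, A.card ≤ 4 * (A.filter (fun u => f u = q)).card := by
    by_contra! hcon
    have h1 : A.card = ∑ q : Bool × Bool, (A.filter (fun u => f u = q)).card :=
      Finset.card_eq_sum_card_fiberwise (fun _ _ => by simp)
    simp only [Fintype.sum_prod_type, Fintype.sum_bool] at h1
    have := hcon (true, true)
    have := hcon (true, false)
    have := hcon (false, true)
    have := hcon (false, false)
    omega
  refine ⟨_, Finset.filter_subset _ _, ?_, hq⟩
  intro x hx y hy
  have hxy : f x = f y := (Finset.mem_filter.1 hx).2.trans (Finset.mem_filter.1 hy).2.symm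
  simp only [f, Prod.mk.injEq, decide_eq_decide] at hxy
  have key : ∀ {x y : ℝ}, (0 ≤ x ↔ 0 ≤ y) → 0 ≤ x * y := by
    intro x y hxy
    by_cases hx : 0 ≤ x
    · exact mul_nonneg hx (hxy.1 hx)
    · have hy : ¬ 0 ≤ y := fun hy => hx (hxy.2 hy)
      push Not at hx hy
      exact (mul_pos_of_neg_of_neg hx hy).le
  exact ⟨key hxy.1, key hxy.2⟩

/-! ### Rich lines through the origin -/

/-- The first coordinates of the points of `A × A` on the line of slope `l` through the origin. -/
noncomputable def lineFiber (A : Finset ℂ) (l : ℂ) : Finset ℂ := A.filter (fun x => l * x ∈ A)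

lemma mem_lineFiber {A : Finset ℂ} {l x : ℂ} : x ∈ lineFiber A l ↔ x ∈ A ∧ l * x ∈ A :=
  Finset.mem_filter

lemma card_le_card_add_self (A : Finset ℂ) : A.card ≤ (A + A).card := by
  rcases A.eq_empty_or_nonempty with rfl | h
  · simp
  · exact Finset.card_le_card_add_left h

lemma card_slopes_mul_sq_le {A : Finset ℂ} (h0 : (0 : ℂ) ∉ A) (hA : SameQuadrant A)
    (L : Finset ℂ) (t : ℕ) (hL : ∀ l ∈ L, t ≤ (lineFiber A l).card) :
    L.card * t ^ 2 ≤ 8 * (A + A).card ^ 2 := by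
  rcases lt_or_ge L.card 2 with hcard | hcard
  · -- with at most one slope the trivial bound `t ≤ |A| ≤ |A + A|` suffices
    rcases L.eq_empty_or_nonempty with rfl | ⟨l, hl⟩
    · simp
    · have h1 : t ≤ (A + A).card :=
        (hL l hl).trans ((Finset.card_filter_le _ _).trans (card_le_card_add_self A))
      have h2 : t ^ 2 ≤ (A + A).card ^ 2 := Nat.pow_le_pow_left h1 2
      nlinarith
  · have hnn : ∀ l, ∃ m, l ∈ L → m ∈ L ∧ m ≠ l ∧
        ∀ k ∈ L, k ≠ l → Complex.normSq (l - m) ≤ Complex.normSq (l - k) := by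
      intro l
      by_cases hl : l ∈ L
      · have hne : (L.erase l).Nonempty := by
          rw [← Finset.card_pos, Finset.card_erase_of_mem hl]; omega
        obtain ⟨m, hm, hmin⟩ :=
          Finset.exists_min_image (L.erase l) (fun k => Complex.normSq (l - k)) hne
        obtain ⟨hm1, hm2⟩ := Finset.mem_erase.1 hm
        exact ⟨m, fun _ => ⟨hm2, hm1, fun k hk hkl => hmin k (Finset.mem_erase.2 ⟨hkl, hk⟩)⟩⟩
      · exact ⟨0, fun h => absurd h hl⟩
    choose nn hnn using hnn
    let R : ℂ → ℂ × ℂ → Prop := fun l s =>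
      ∃ x ∈ lineFiber A l, ∃ y ∈ lineFiber A (nn l), s = (x + y, l * x + nn l * y)
    have key := Finset.card_mul_le_card_mul (s := L) (t := (A + A) ×ˢ (A + A)) (m := t ^ 2)
      (n := 8) R ?_ ?_
    · rw [Finset.card_product] at key
      nlinarith
    · intro l hl
      obtain ⟨hm, hne, -⟩ := hnn l hl
      calc t ^ 2 ≤ (lineFiber A l ×ˢ lineFiber A (nn l)).card := by
            rw [Finset.card_product, sq]
            exact Nat.mul_le_mul (hL l hl) (hL _ hm)
        _ ≤ _ := by
            refine Finset.card_le_card_of_injOn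
              (fun q => (q.1 + q.2, l * q.1 + nn l * q.2)) ?_ ?_
            · rintro ⟨x, y⟩ hq
              obtain ⟨hx, hy⟩ := Finset.mem_product.1 hq
              obtain ⟨hx1, hx2⟩ := mem_lineFiber.1 hx
              obtain ⟨hy1, hy2⟩ := mem_lineFiber.1 hy
              exact Finset.mem_coe.2 (Finset.mem_filter.2 ⟨Finset.mem_product.2
                ⟨Finset.add_mem_add hx1 hy1, Finset.add_mem_add hx2 hy2⟩, x, hx, y, hy, rfl⟩)
            · rintro ⟨x, y⟩ - ⟨x', y'⟩ - h
              simp only [Prod.mk.injEq] at h ⊢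
              have h3 : (nn l - l) * (y - y') = 0 := by linear_combination h.2 - l * h.1
              have h4 : y = y' :=
                sub_eq_zero.1 ((mul_eq_zero.1 h3).resolve_left (sub_ne_zero.2 hne))
              exact ⟨by linear_combination h.1 - h4, h4⟩
    · rintro ⟨s, v⟩ -
      -- in the discs around `l` with radius the distance to `nn l`, the common point is `v / s`
      have hR : ∀ l ∈ L, R l (s, v) → l ≠ v / s ∧
          Complex.normSq (l - v / s) ≤ Complex.normSq (l - nn l) := by
        rintro l hl ⟨x, hx, y, hy, heq⟩
        simp only [Prod.mk.injEq] at heq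
        obtain ⟨rfl, rfl⟩ := heq
        have hxA := (mem_lineFiber.1 hx).1
        have hyA := (mem_lineFiber.1 hy).1
        have hy0 : y ≠ 0 := fun h => h0 (h ▸ hyA)
        have hle := hA.normSq_le hxA hyA
        have hpos : 0 < Complex.normSq (x + y) := (Complex.normSq_pos.2 hy0).trans_le hle
        have hs : x + y ≠ 0 := Complex.normSq_pos.1 hpos
        have e : l - (l * x + nn l * y) / (x + y) = (l - nn l) * (y / (x + y)) := by
          field_simp; ring
        constructor
        · rw [← sub_ne_zero, e]
          exact mul_ne_zero (sub_ne_zero.2 (hnn l hl).2.1.symm) (div_ne_zero hy0 hs)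
        · rw [e, map_mul, map_div₀]
          exact mul_le_of_le_one_right (Complex.normSq_nonneg _) ((div_le_one hpos).2 hle)
      refine card_le_eight_of_separated _ (v / s) (fun l => Complex.normSq (l - nn l)) ?_ ?_ ?_
      · intro l hl
        obtain ⟨h1, h2⟩ := Finset.mem_filter.1 hl
        exact (hR l h1 h2).1
      · intro l hl
        obtain ⟨h1, h2⟩ := Finset.mem_filter.1 hl
        exact (hR l h1 h2).2
      · intro l hl m hm hlm
        exact (hnn l (Finset.mem_filter.1 hl).1).2.2 m (Finset.mem_filter.1 hm).1 hlm.symm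

/-! ### Multiplicative energy -/

lemma mulEnergy_le_sum_sq {A : Finset ℂ} (h0 : (0 : ℂ) ∉ A) :
    Finset.mulEnergy A A ≤ ∑ l ∈ A / A, (lineFiber A l).card ^ 2 := by
  unfold Finset.mulEnergy
  rw [Finset.card_eq_sum_card_fiberwise (f := fun q : (ℂ × ℂ) × ℂ × ℂ => q.1.1 / q.1.2)
    (t := A / A)]
  · refine Finset.sum_le_sum fun l _ => ?_
    rw [sq, ← Finset.card_product]
    refine Finset.card_le_card_of_injOn (fun q => (q.1.2, q.2.1)) ?_ ?_
    · rintro ⟨⟨a, b⟩, c, d⟩ hq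
      simp only [Finset.coe_filter, Finset.mem_filter, Finset.mem_product, Set.mem_ofPred_eq] at hq
      obtain ⟨⟨⟨⟨ha, hb⟩, hc, hd⟩, he⟩, hl⟩ := hq
      have hb0 : b ≠ 0 := fun h => h0 (h ▸ hb)
      have e1 : l * b = a := by rw [← hl]; field_simp
      have e2 : l * c = d := by rw [← hl]; field_simp; linear_combination he
      simp only [Finset.coe_product, Set.mem_prod, Finset.mem_coe, mem_lineFiber, e1, e2]
      exact ⟨⟨hb, ha⟩, hc, hd⟩
    · rintro ⟨⟨a, b⟩, c, d⟩ hq ⟨⟨a', b'⟩, c', d'⟩ hq' h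
      simp only [Finset.coe_filter, Finset.mem_filter, Finset.mem_product, Set.mem_ofPred_eq]
        at hq hq'
      obtain ⟨⟨⟨⟨ha, hb⟩, hc, hd⟩, he⟩, hl⟩ := hq
      obtain ⟨⟨⟨⟨ha', hb'⟩, hc', hd'⟩, he'⟩, hl'⟩ := hq'
      simp only [Prod.mk.injEq] at h
      obtain ⟨rfl, rfl⟩ := h
      have hb0 : b ≠ 0 := fun h => h0 (h ▸ hb)
      have e1 : a = a' := by
        rw [← hl'] at hl
        field_simp at hl
        exact hl
      subst e1
      have e2 : d = d' := mul_left_cancel₀ hb0 (he.symm.trans he')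
      rw [e2]
  · rintro ⟨⟨a, b⟩, c, d⟩ hq
    simp only [Finset.coe_filter, Finset.mem_product, Set.mem_ofPred_eq] at hq
    exact Finset.mem_coe.2 (Finset.div_mem_div hq.1.1.1 hq.1.1.2)

/-- Summation by parts: a weak-type bound on the level sets of `r` bounds the sum of squares,
with a logarithmic loss. -/
lemma sum_sq_le_of_level {ι : Type*} (s : Finset ι) (r : ι → ℕ) (n : ℕ) (C : ℝ)
    (hr : ∀ i ∈ s, r i ≤ n)
    (hC : ∀ t : ℕ, ((s.filter (fun i => t ≤ r i)).card : ℝ) * (t : ℝ) ^ 2 ≤ C) :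
    ∑ i ∈ s, (r i : ℝ) ^ 2 ≤ 2 * C * (1 + Real.log n) := by
  have hC0 : 0 ≤ C := by simpa using hC 0
  have e1 : ∀ m : ℕ, (m : ℝ) ^ 2 ≤ ∑ t ∈ Finset.range m, 2 * ((t : ℝ) + 1) := by
    intro m
    induction m with
    | zero => simp
    | succ k ih => rw [Finset.sum_range_succ]; push_cast; nlinarith
  calc ∑ i ∈ s, (r i : ℝ) ^ 2
      ≤ ∑ i ∈ s, ∑ t ∈ Finset.range n, if t + 1 ≤ r i then 2 * ((t : ℝ) + 1) else 0 := by
        refine Finset.sum_le_sum fun i hi => (e1 (r i)).trans (le_of_eq ?_)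
        rw [← Finset.sum_filter]
        congr 1
        ext t
        have := hr i hi
        simp only [Finset.mem_range, Finset.mem_filter]
        omega
    _ = ∑ t ∈ Finset.range n, ((s.filter (fun i => t + 1 ≤ r i)).card : ℝ)
          * (2 * ((t : ℝ) + 1)) := by
        rw [Finset.sum_comm]
        refine Finset.sum_congr rfl fun t _ => ?_
        rw [← Finset.sum_filter, Finset.sum_const, nsmul_eq_mul]
    _ ≤ ∑ t ∈ Finset.range n, 2 * C * ((t : ℝ) + 1)⁻¹ := by
        refine Finset.sum_le_sum fun t _ => ?_
        have h := hC (t + 1)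
        push_cast at h
        have ht : (0 : ℝ) < (t : ℝ) + 1 := by positivity
        rw [← div_eq_mul_inv, le_div_iff₀ ht]
        nlinarith
    _ = 2 * C * (harmonic n : ℝ) := by
        rw [← Finset.mul_sum, harmonic]; push_cast; rfl
    _ ≤ 2 * C * (1 + Real.log n) :=
        mul_le_mul_of_nonneg_left (harmonic_le_one_add_log n) (by positivity)

lemma card_pow_four_le {A : Finset ℂ} (h0 : (0 : ℂ) ∉ A) (hA : SameQuadrant A) :
    (A.card : ℝ) ^ 4 ≤
      (A * A).card * (16 * ((A + A).card : ℝ) ^ 2 * (1 + Real.log A.card)) := by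
  have h1 : (A.card : ℝ) ^ 4 ≤ (A * A).card * (Finset.mulEnergy A A : ℝ) := by
    have h := Finset.le_card_mul_mul_mulEnergy A A
    rw [← pow_add] at h
    exact_mod_cast h
  have h2 : (Finset.mulEnergy A A : ℝ) ≤ ∑ l ∈ A / A, ((lineFiber A l).card : ℝ) ^ 2 := by
    exact_mod_cast mulEnergy_le_sum_sq h0
  have h3 := sum_sq_le_of_level (A / A) (fun l => (lineFiber A l).card) A.card
    (8 * ((A + A).card : ℝ) ^ 2) (fun l _ => Finset.card_filter_le _ _) (fun t => by
      exact_mod_cast card_slopes_mul_sq_le h0 hA _ t (fun l hl => (Finset.mem_filter.1 hl).2))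
  refine h1.trans (mul_le_mul_of_nonneg_left (h2.trans (h3.trans (le_of_eq ?_))) (by positivity))
  ring

theorem sum_product_bound :
    ∃ c : ℝ, 0 < c ∧ ∀ A : Finset ℂ, (0 : ℂ) ∉ A → 2 ≤ A.card →
      c * (A.card : ℝ) ^ ((4 : ℝ) / 3) / (Real.log (A.card : ℝ)) ^ ((1 : ℝ) / 3) ≤
        ((A + A).card : ℝ) + ((A * A).card : ℝ) := by
  -- `24 ^ 3` exceeds `4 ^ 4 * 16 * 3`, the product of the losses from the quadrant, the energy
  -- bound and `1 + log n ≤ 3 log n`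
  refine ⟨1 / 24, by norm_num, fun A h0 hcard => ?_⟩
  obtain ⟨B, hBA, hB, hAB⟩ := exists_sameQuadrant A
  have hmain := card_pow_four_le (fun h => h0 (hBA h)) hB
  have hS : ((B + B).card : ℝ) ≤ (A + A).card := by
    exact_mod_cast Finset.card_le_card (Finset.add_subset_add hBA hBA)
  have hP : ((B * B).card : ℝ) ≤ (A * A).card := by
    exact_mod_cast Finset.card_le_card (Finset.mul_subset_mul hBA hBA)
  have hn : (A.card : ℝ) ≤ 4 * B.card := by exact_mod_cast hAB
  have hn2 : (2 : ℝ) ≤ A.card := by exact_mod_cast hcard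
  have hBpos : (0 : ℝ) < B.card := by linarith
  have hBlog : Real.log B.card ≤ Real.log A.card :=
    Real.log_le_log hBpos (by exact_mod_cast Finset.card_le_card hBA)
  have hlog : (1 : ℝ) / 2 ≤ Real.log A.card :=
    (by linarith [Real.log_two_gt_d9] : (1 : ℝ) / 2 ≤ Real.log 2).trans
      (Real.log_le_log two_pos hn2)
  set S : ℝ := ((A + A).card : ℝ)
  set P : ℝ := ((A * A).card : ℝ)
  set n : ℝ := (A.card : ℝ)
  set ℓ : ℝ := Real.log n
  have hS0 : 0 ≤ S := Nat.cast_nonneg _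
  have hP0 : 0 ≤ P := Nat.cast_nonneg _
  have hℓ : 0 < ℓ := by linarith
  have hBlog0 : 0 ≤ Real.log B.card := Real.log_natCast_nonneg _
  have hcube : (n ^ 4) / 24 ^ 3 / ℓ ≤ (S + P) ^ 3 := by
    rw [div_le_iff₀ hℓ]
    have h1 : n ^ 4 ≤ (4 * (B.card : ℝ)) ^ 4 := pow_le_pow_left₀ (by linarith) hn 4
    have h2 : ((B * B).card : ℝ) * (16 * ((B + B).card : ℝ) ^ 2 * (1 + Real.log B.card))
        ≤ P * (16 * S ^ 2 * (3 * ℓ)) := by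
      gcongr
      linarith
    have h3 : P * S ^ 2 ≤ (S + P) ^ 3 := by
      have : (0 : ℝ) ≤ S ^ 3 + 2 * (S ^ 2 * P) + 3 * (S * P ^ 2) + P ^ 3 := by positivity
      nlinarith
    have h4 : P * S ^ 2 * ℓ ≤ (S + P) ^ 3 * ℓ := mul_le_mul_of_nonneg_right h3 hℓ.le
    have h5 : 0 ≤ P * S ^ 2 * ℓ := by positivity
    nlinarith
  refine le_of_pow_le_pow_left₀ three_ne_zero (by positivity) (le_trans (le_of_eq ?_) hcube)
  rw [div_pow, mul_pow, ← Real.rpow_mul_natCast (by linarith), ← Real.rpow_mul_natCast hℓ.le]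
  norm_num
  ring
end

section
/- There is an absolute constant c > 0 such that for every finite set A ⊆ ℂ with 0 ∉ A and |A| ≥ 2, one has |A − A| + |A : A| ≥ c·|A|^{40/31}/(log |A|)^{4/31}. -/
open scoped Pointwise Classical
open Finset

/-!
Write `n = |A|`, `K = |A - A|`, `Q = |A : A|`. The proof yields
`n ^ 22 ≤ C * (K + Q) ^ 17 * (1 + log n) ^ 4` (`card_pow_le`), which is stronger than the claim
because `22 / 17 > 40 / 31`, so that the logarithm can be absorbed (`absorb_log`).

*Incidences.* For lines `y = m * x + s` in `ℂ²` and a grid `B × C`, a Szemerédi–Trotter bound has an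
elementary proof. On a line with at least `k` grid points, the discs reaching from each of them to
its nearest neighbour on the line cover any point at most `25` times (`overlap`). Hence for at
least half of the points the disc contains `O(|B| / k)` points of `B`, and its image
`O(|C| / k)` points of `C`, so there are `O((|B||C|) ^ 2 / k ^ 2)` choices of such a point together
with its neighbour, and these two points determine the line (`rich_incidences`, `rich_sq`).

*Third energy.* Let `X` be the set of differences with at least `τ` representations and let `G` be
the set of pairs in `A × A` with difference in `X`. Two pairs `(p, c)`, `(p', c')` of `G` determine
the line of slope `c' / c ∈ A : A` through `(p - c, p' - c')` and `(p, p')`; it meets both `X × X`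
and `A × A`. Counting pairs of elements of `G` by their lines bounds `|G|` from the second moments
of the incidences (`edges_pow_six_le`); the variant for pairs `(b - b', b)` treats the
case of small `|G|` (`edges_sq_le`). The result is `|X| ^ 2 * τ ^ 6 ≤ C * n ^ 5 * Q ^ (3 / 2)`
(`level_bound`), hence `E₃ ^ 2 ≤ C * n ^ 5 * Q ^ (3 / 2) * (1 + log n) ^ 2` for the third energy
`E₃ = ∑ rep ^ 3` (`third_energy_le`).

*Energy of `A` and `A - A`.* The lines `y = c * x + t`, `c ∈ A`, on the grid
`(A : A) × (A - A)` give `F = ∑ rho ^ 2 ≤ C * Q * K ^ (3 / 2)` (`sum_rho_sq_le`).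

*Combination.* Counting triples `(a, c, c')` with `c' - c` a popular difference through the map
`(a - c, a - c')` gives `n ^ 8 ≤ 8 * K * E₃ * F` (`card_pow_eight_le`).
-/

/-! ### An incidence bound for grids -/

/-- Number of `b ∈ B` whose image under the line `y = ℓ.1 * x + ℓ.2` lies in `C`, that is, the
number of points of the grid `B × C` on that line. -/
noncomputable def inc (B C : Finset ℂ) (ℓ : ℂ × ℂ) : ℕ :=
  #(B.filter (fun b => ℓ.1 * b + ℓ.2 ∈ C))

lemma one_le_norm_unit_sub {w w' : ℂ} (hw' : w' ≠ 0) (hle : ‖w'‖ ≤ ‖w‖)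
    (h : ‖w‖ ≤ ‖w - w'‖) : 1 ≤ ‖w / (‖w‖ : ℂ) - w' / (‖w'‖ : ℂ)‖ := by
  have ht : 0 < ‖w'‖ := norm_pos_iff.mpr hw'
  have hT : 0 < ‖w‖ := ht.trans_le hle
  have e : w - w' = ((‖w‖ - ‖w'‖ : ℝ) : ℂ) * (w / (‖w‖ : ℂ))
      + (‖w'‖ : ℂ) * (w / (‖w‖ : ℂ) - w' / (‖w'‖ : ℂ)) := by
    have h1 : (‖w‖ : ℂ) ≠ 0 := by exact_mod_cast hT.ne'
    have h2 : (‖w'‖ : ℂ) ≠ 0 := by exact_mod_cast ht.ne'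
    push_cast
    field_simp
    ring
  have h3 : ‖w - w'‖ ≤ (‖w‖ - ‖w'‖) + ‖w'‖ * ‖w / (‖w‖ : ℂ) - w' / (‖w'‖ : ℂ)‖ := by
    conv_lhs => rw [e]
    refine (norm_add_le _ _).trans (le_of_eq ?_)
    rw [norm_mul, norm_mul, norm_div, Complex.norm_real, Complex.norm_real, Complex.norm_real]
    simp only [norm_norm]
    rw [div_self hT.ne', Real.norm_of_nonneg (sub_nonneg.mpr hle), mul_one]
  nlinarith

/-- A point lies in at most `5 ^ 2` of the discs centred at the points of `S` whose radii are at
most the distance to the nearest other point of `S`: seen from the point, the centres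
have directions that are pairwise at distance at least `1`. -/
lemma overlap (S : Finset ℂ) (δ : ℂ → ℝ)
    (hδ : ∀ b ∈ S, ∀ b' ∈ S, b ≠ b' → δ b ≤ ‖b' - b‖) (z : ℂ) :
    #(S.filter (fun b => ‖z - b‖ ≤ δ b)) ≤ 25 := by
  set T := S.filter (fun b => ‖z - b‖ ≤ δ b) with hT
  let u : ℂ → ℂ := fun b => (b - z) / (‖b - z‖ : ℂ)
  have key : ∀ b ∈ T, ∀ b' ∈ T, b ≠ b' → 1 ≤ ‖u b - u b'‖ := by
    have main : ∀ b ∈ T, ∀ b' ∈ T, b ≠ b' → ‖b' - z‖ ≤ ‖b - z‖ → 1 ≤ ‖u b - u b'‖ := by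
      intro b hb b' hb' hne hle
      rw [hT, mem_filter] at hb hb'
      have h1 : ‖b - z‖ ≤ ‖(b - z) - (b' - z)‖ := by
        have := hδ b hb.1 b' hb'.1 hne
        rw [sub_sub_sub_cancel_right, norm_sub_rev b b', norm_sub_rev b z]
        exact hb.2.trans this
      by_cases h0 : b' - z = 0
      · have hbz : b - z ≠ 0 := by
          intro h; apply hne
          rw [sub_eq_zero.mp h, sub_eq_zero.mp h0]
        simp only [u, h0, norm_zero, Complex.ofReal_zero, div_zero, sub_zero, norm_div,
          Complex.norm_real, norm_norm]
        rw [div_self (norm_ne_zero_iff.mpr hbz)]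
      · exact one_le_norm_unit_sub h0 hle h1
    intro b hb b' hb' hne
    rcases le_total ‖b' - z‖ ‖b - z‖ with h | h
    · exact main b hb b' hb' hne h
    · rw [norm_sub_rev]; exact main b' hb' b hb hne.symm h
  have hinj : Set.InjOn u T := by
    intro b hb b' hb' h
    by_contra hne
    have := key b hb b' hb' hne
    rw [h, sub_self, norm_zero] at this
    linarith
  rw [← card_image_of_injOn hinj]
  have := Besicovitch.card_le_of_separated (T.image u) (by
      intro c hc
      obtain ⟨b, -, rfl⟩ := mem_image.mp hc
      simp only [u, norm_div, Complex.norm_real, norm_norm]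
      exact (div_self_le_one _).trans one_le_two) (by
      intro c hc d hd hcd
      obtain ⟨b, hb, rfl⟩ := mem_image.mp hc
      obtain ⟨b', hb', rfl⟩ := mem_image.mp hd
      exact key b hb b' hb' (fun h => hcd (by rw [h])))
  rwa [Complex.finrank_real_complex] at this

/-- Summed form of `overlap`, for the discs and for their images under `x ↦ m * x + s`. -/
lemma sum_disc_le (S C : Finset ℂ) (δ : ℂ → ℝ)
    (hδ : ∀ b ∈ S, ∀ b' ∈ S, b ≠ b' → δ b ≤ ‖b' - b‖) {m : ℂ} (hm : m ≠ 0) (s : ℂ) :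
    ∑ b ∈ S, #(C.filter (fun c => ‖c - (m * b + s)‖ ≤ ‖m‖ * δ b)) ≤ 25 * #C := by
  simp only [card_filter]
  rw [sum_comm]
  simp only [← card_filter]
  rw [mul_comm, ← smul_eq_mul]
  refine sum_le_card_nsmul _ _ _ (fun c _ => ?_)
  refine le_trans (le_of_eq ?_) (overlap S δ hδ ((c - s) / m))
  congr 1
  refine filter_congr (fun b _ => ?_)
  have : c - (m * b + s) = m * ((c - s) / m - b) := by field_simp; ring
  rw [this, norm_mul, mul_le_mul_iff_right₀ (norm_pos_iff.mpr hm)]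

/-- At most a quarter of the index set can exceed four times the average. -/
lemma card_bad_le {S : Finset ℂ} {N : ℂ → ℕ} {k M : ℕ} (hk : k ≤ #S)
    (hpos : ∀ b ∈ S, 0 < M) (h : ∑ b ∈ S, N b ≤ 25 * M) :
    4 * #(S.filter (fun b => 100 * M < k * N b)) ≤ #S := by
  rcases S.eq_empty_or_nonempty with rfl | ⟨b₀, hb₀⟩
  · simp
  have hM := hpos b₀ hb₀
  have h1 : #(S.filter (fun b => 100 * M < k * N b)) * (100 * M) ≤ k * (25 * M) := by
    calc #(S.filter (fun b => 100 * M < k * N b)) * (100 * M)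
        ≤ ∑ b ∈ S.filter (fun b => 100 * M < k * N b), k * N b := by
          rw [← smul_eq_mul]
          exact card_nsmul_le_sum _ _ _ (fun b hb => (mem_filter.mp hb).2.le)
      _ ≤ ∑ b ∈ S, k * N b := sum_le_sum_of_subset (filter_subset _ _)
      _ = k * ∑ b ∈ S, N b := by rw [mul_sum]
      _ ≤ _ := Nat.mul_le_mul_left _ h
  have h2 : (4 * #(S.filter (fun b => 100 * M < k * N b))) * (25 * M) ≤ #S * (25 * M) := by
    calc _ = #(S.filter (fun b => 100 * M < k * N b)) * (100 * M) := by ring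
      _ ≤ k * (25 * M) := h1
      _ ≤ _ := Nat.mul_le_mul_right _ hk
  exact Nat.le_of_mul_le_mul_right h2 (by omega)

/-- Pairs `(b, b')` from `B` such that `b'` is among the `100 * #B / k` points of `B`
nearest to `b`. -/
noncomputable def nearPairs (B : Finset ℂ) (k : ℕ) : Finset (ℂ × ℂ) :=
  (B ×ˢ B).filter (fun p => k * #(B.filter (fun x => ‖x - p.1‖ ≤ ‖p.2 - p.1‖)) ≤ 100 * #B)

lemma card_nearPairs_le (B : Finset ℂ) (k : ℕ) :
    k * #(nearPairs B k) ≤ 100 * #B ^ 2 := by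
  have h : ∀ b ∈ B, k * #(B.filter (fun b' =>
      k * #(B.filter (fun x => ‖x - b‖ ≤ ‖b' - b‖)) ≤ 100 * #B)) ≤ 100 * #B := by
    intro b _
    set R := B.filter (fun b' => k * #(B.filter (fun x => ‖x - b‖ ≤ ‖b' - b‖)) ≤ 100 * #B)
      with hR
    rcases R.eq_empty_or_nonempty with h0 | h0
    · rw [h0]; simp
    obtain ⟨b', hb', hmax⟩ := exists_max_image R (fun x => ‖x - b‖) h0
    refine le_trans (Nat.mul_le_mul_left _ (card_le_card ?_)) (mem_filter.mp hb').2
    intro x hx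
    exact mem_filter.mpr ⟨(mem_filter.mp hx).1, hmax x hx⟩
  have e : #(nearPairs B k) = ∑ b ∈ B, #(B.filter (fun b' =>
      k * #(B.filter (fun x => ‖x - b‖ ≤ ‖b' - b‖)) ≤ 100 * #B)) := by
    simp only [nearPairs, card_filter, sum_product]
  rw [e, mul_sum]
  refine (sum_le_card_nsmul _ _ _ h).trans (le_of_eq ?_)
  rw [smul_eq_mul]; ring

/-- For a line with at least `k` points on the grid, at least half of these points have, in both
coordinates, their nearest neighbour along the line among few nearest points of the grid. -/
lemma exists_star (B C : Finset ℂ) {ℓ : ℂ × ℂ} (hm : ℓ.1 ≠ 0) {k : ℕ} (hk2 : 2 ≤ k)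
    (hk : k ≤ inc B C ℓ) :
    ∃ (star : ℂ → ℂ) (U : Finset ℂ), inc B C ℓ ≤ 2 * #U ∧ ∀ b ∈ U,
      star b ≠ b ∧ (b, star b) ∈ nearPairs B k ∧
      (ℓ.1 * b + ℓ.2, ℓ.1 * star b + ℓ.2) ∈ nearPairs C k := by
  obtain ⟨m, s⟩ := ℓ
  simp only at hm ⊢
  set S := B.filter (fun b => m * b + s ∈ C) with hS
  have hinc : inc B C (m, s) = #S := rfl
  rw [hinc] at hk ⊢
  have hex : ∀ b, ∃ b', b ∈ S → b' ∈ S ∧ b' ≠ b ∧ ∀ x ∈ S, x ≠ b → ‖b' - b‖ ≤ ‖x - b‖ := by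
    intro b
    by_cases hb : b ∈ S
    · have : (S.erase b).Nonempty := by
        rw [← card_pos, card_erase_of_mem hb]; omega
      obtain ⟨b', hb', hmin⟩ := exists_min_image (S.erase b) (fun x => ‖x - b‖) this
      exact ⟨b', fun _ => ⟨mem_of_mem_erase hb', ne_of_mem_erase hb',
        fun x hx hxb => hmin x (mem_erase.mpr ⟨hxb, hx⟩)⟩⟩
    · exact ⟨0, fun h => absurd h hb⟩
  choose star hstar using hex
  have hδ : ∀ b ∈ S, ∀ b' ∈ S, b ≠ b' → ‖star b - b‖ ≤ ‖b' - b‖ :=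
    fun b hb b' hb' hne => (hstar b hb).2.2 b' hb' hne.symm
  let NB : ℂ → ℕ := fun b => #(B.filter (fun x => ‖x - b‖ ≤ ‖star b - b‖))
  let NC : ℂ → ℕ := fun b => #(C.filter (fun x =>
    ‖x - (m * b + s)‖ ≤ ‖(m * star b + s) - (m * b + s)‖))
  have hNB : ∑ b ∈ S, NB b ≤ 25 * #B := by
    simpa using sum_disc_le S B (fun b => ‖star b - b‖) hδ one_ne_zero 0
  have hNC : ∑ b ∈ S, NC b ≤ 25 * #C := by
    have := sum_disc_le S C (fun b => ‖star b - b‖) hδ hm s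
    refine le_trans (le_of_eq (sum_congr rfl fun b _ => ?_)) this
    simp only [NC]
    rw [add_sub_add_right_eq_sub, ← mul_sub, norm_mul]
  have h1 := card_bad_le hk (fun b hb => card_pos.mpr ⟨b, (mem_filter.mp hb).1⟩) hNB
  have h2 := card_bad_le hk (fun b hb => card_pos.mpr ⟨_, (mem_filter.mp hb).2⟩) hNC
  refine ⟨star, S.filter (fun b => k * NB b ≤ 100 * #B ∧ k * NC b ≤ 100 * #C), ?_, ?_⟩
  · have hsub : S ⊆ S.filter (fun b => k * NB b ≤ 100 * #B ∧ k * NC b ≤ 100 * #C) ∪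
        (S.filter (fun b => 100 * #B < k * NB b) ∪ S.filter (fun b => 100 * #C < k * NC b)) := by
      intro b hb
      simp only [mem_union, mem_filter, hb, true_and]
      omega
    have h3 := (card_le_card hsub).trans (card_union_le _ _)
    have h4 := card_union_le (S.filter (fun b => 100 * #B < k * NB b))
      (S.filter (fun b => 100 * #C < k * NC b))
    omega
  · intro b hb
    obtain ⟨hbS, hb1, hb2⟩ := mem_filter.mp hb
    obtain ⟨hs1, hs2, -⟩ := hstar b hbS
    refine ⟨hs2, ?_, ?_⟩
    · exact mem_filter.mpr ⟨mem_product.mpr ⟨(mem_filter.mp hbS).1, (mem_filter.mp hs1).1⟩, hb1⟩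
    · exact mem_filter.mpr ⟨mem_product.mpr ⟨(mem_filter.mp hbS).2, (mem_filter.mp hs1).2⟩, hb2⟩

/-- A Szemerédi–Trotter bound for cartesian products: the incidences on `k`-rich lines. -/
lemma rich_incidences (B C : Finset ℂ) (L : Finset (ℂ × ℂ)) (hL : ∀ ℓ ∈ L, ℓ.1 ≠ 0) {k : ℕ}
    (hk2 : 2 ≤ k) :
    k ^ 2 * ∑ ℓ ∈ L.filter (fun ℓ => k ≤ inc B C ℓ), inc B C ℓ
      ≤ 20000 * (#B ^ 2 * #C ^ 2) := by
  set L' := L.filter (fun ℓ => k ≤ inc B C ℓ) with hL'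
  have hex : ∀ ℓ : ℂ × ℂ, ∃ (star : ℂ → ℂ) (U : Finset ℂ), ℓ ∈ L' → (inc B C ℓ ≤ 2 * #U ∧
      ∀ b ∈ U, star b ≠ b ∧ (b, star b) ∈ nearPairs B k ∧
      (ℓ.1 * b + ℓ.2, ℓ.1 * star b + ℓ.2) ∈ nearPairs C k) := by
    intro ℓ
    by_cases h : ℓ ∈ L'
    · obtain ⟨h1, h2⟩ := mem_filter.mp h
      obtain ⟨star, U, hU⟩ := exists_star B C (hL ℓ h1) hk2 h2
      exact ⟨star, U, fun _ => hU⟩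
    · exact ⟨id, ∅, fun h' => absurd h' h⟩
  choose star U hU using hex
  have hinj : #(L'.sigma U) ≤ #(nearPairs B k ×ˢ nearPairs C k) := by
    refine card_le_card_of_injOn (fun p => ((p.2, star p.1 p.2),
      (p.1.1 * p.2 + p.1.2, p.1.1 * star p.1 p.2 + p.1.2))) ?_ ?_
    · rintro ⟨ℓ, b⟩ hp
      obtain ⟨h1, h2⟩ := mem_sigma.mp (mem_coe.mp hp)
      have := (hU ℓ h1).2 b h2
      exact mem_coe.mpr (mem_product.mpr ⟨this.2.1, this.2.2⟩)
    · rintro ⟨⟨m, s⟩, b⟩ hp ⟨⟨m', s'⟩, b'⟩ hp' h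
      obtain ⟨h1, h2⟩ := mem_sigma.mp (mem_coe.mp hp)
      have h3 := ((hU _ h1).2 b h2).1
      simp only [Prod.mk.injEq] at h
      obtain ⟨⟨rfl, e1⟩, e2, e3⟩ := h
      -- two distinct points determine the line
      rw [← e1] at e3
      simp only at h3
      have e4 : (m - m') * (star (m, s) b - b) = 0 := by linear_combination e3 - e2
      have hmm : m = m' := by
        rcases mul_eq_zero.mp e4 with h | h
        · exact sub_eq_zero.mp h
        · exact absurd (sub_eq_zero.mp h) h3
      subst hmm
      have : s = s' := by linear_combination e2
      subst this
      rfl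
  rw [card_sigma, card_product] at hinj
  have h1 : ∑ ℓ ∈ L', inc B C ℓ ≤ 2 * ∑ ℓ ∈ L', #(U ℓ) := by
    rw [mul_sum]
    exact sum_le_sum fun ℓ hℓ => (hU ℓ hℓ).1
  calc k ^ 2 * ∑ ℓ ∈ L', inc B C ℓ
      ≤ k ^ 2 * (2 * (#(nearPairs B k) * #(nearPairs C k))) := by gcongr; exact h1.trans (by gcongr)
    _ = 2 * ((k * #(nearPairs B k)) * (k * #(nearPairs C k))) := by ring
    _ ≤ 2 * ((100 * #B ^ 2) * (100 * #C ^ 2)) := by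
        exact Nat.mul_le_mul_left _
          (Nat.mul_le_mul (card_nearPairs_le B k) (card_nearPairs_le C k))
    _ = _ := by ring

/-! ### Moments of the incidence function -/

lemma inc_le_card (B C : Finset ℂ) (ℓ : ℂ × ℂ) : inc B C ℓ ≤ #B := card_filter_le _ _

/-- Second-moment form of `rich_incidences`, by summation by parts. -/
lemma rich_sq (B C : Finset ℂ) (L : Finset (ℂ × ℂ)) (hL : ∀ ℓ ∈ L, ℓ.1 ≠ 0) {Δ : ℝ}
    (hΔ : 1 ≤ Δ) :
    ∑ ℓ ∈ L.filter (fun ℓ => Δ < inc B C ℓ), (inc B C ℓ : ℝ) ^ 2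
      ≤ 40000 * ((#B : ℝ) ^ 2 * (#C : ℝ) ^ 2) / Δ := by
  set k₀ : ℕ := ⌊Δ⌋₊ + 1 with hk₀
  have hk2 : 2 ≤ k₀ := by
    have : 1 ≤ ⌊Δ⌋₊ := Nat.one_le_floor_iff _ |>.mpr hΔ
    omega
  have hk0Δ : Δ < k₀ := by rw [hk₀]; push_cast; exact Nat.lt_floor_add_one Δ
  have hk0pos : (0 : ℝ) < k₀ := by positivity
  set W : ℝ := 20000 * ((#B : ℝ) ^ 2 * (#C : ℝ) ^ 2) with hW
  have hW0 : 0 ≤ W := by positivity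
  let f : ℕ → ℝ := fun k => ∑ ℓ ∈ L.filter (fun ℓ => k ≤ inc B C ℓ), (inc B C ℓ : ℝ)
  have hf : ∀ k, 2 ≤ k → f k ≤ W * ((k : ℝ) ^ 2)⁻¹ := by
    intro k hk
    have h := rich_incidences B C L hL hk
    have h' : (k : ℝ) ^ 2 * f k ≤ W := by simp only [f, hW]; exact_mod_cast h
    have hkp : (0 : ℝ) < (k : ℝ) ^ 2 := by positivity
    rw [← div_eq_mul_inv, le_div_iff₀ hkp]
    linarith
  set N := max k₀ (#B) with hN
  have step : ∑ ℓ ∈ L.filter (fun ℓ => Δ < inc B C ℓ), (inc B C ℓ : ℝ) ^ 2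
      ≤ k₀ * f k₀ + ∑ k ∈ Ioc k₀ N, f k := by
    have e : ∑ k ∈ Ioc k₀ N, f k = ∑ ℓ ∈ L, ∑ k ∈ Ioc k₀ N,
        if k ≤ inc B C ℓ then (inc B C ℓ : ℝ) else 0 := by
      simp only [f, sum_filter]
      rw [sum_comm]
    have e2 : k₀ * f k₀ = ∑ ℓ ∈ L, if k₀ ≤ inc B C ℓ then (k₀ : ℝ) * inc B C ℓ else 0 := by
      simp only [f, sum_filter, mul_sum, mul_ite, mul_zero]
    rw [e, e2, ← sum_add_distrib, sum_filter]
    refine sum_le_sum (fun ℓ _ => ?_)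
    split_ifs with h1 h2
    · have hsum : ∑ k ∈ Ioc k₀ N, (if k ≤ inc B C ℓ then (inc B C ℓ : ℝ) else 0)
          = ((inc B C ℓ : ℝ) - k₀) * inc B C ℓ := by
        rw [← sum_filter, sum_const, nsmul_eq_mul]
        have : (Ioc k₀ N).filter (fun k => k ≤ inc B C ℓ) = Ioc k₀ (inc B C ℓ) := by
          ext k
          simp only [mem_filter, mem_Ioc]
          have := inc_le_card B C ℓ
          omega
        rw [this, Nat.card_Ioc, Nat.cast_sub h2]
      rw [hsum]; nlinarith
    · exfalso
      apply h2
      rw [hk₀]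
      exact Nat.succ_le_of_lt ((Nat.floor_lt (by linarith)).mpr h1)
    · have : 0 ≤ ∑ k ∈ Ioc k₀ N, (if k ≤ inc B C ℓ then (inc B C ℓ : ℝ) else 0) :=
        sum_nonneg (fun k _ => by split_ifs <;> positivity)
      positivity
    · have : 0 ≤ ∑ k ∈ Ioc k₀ N, (if k ≤ inc B C ℓ then (inc B C ℓ : ℝ) else 0) :=
        sum_nonneg (fun k _ => by split_ifs <;> positivity)
      linarith
  have s1 : k₀ * f k₀ ≤ W / k₀ := by
    have := mul_le_mul_of_nonneg_left (hf k₀ hk2) hk0pos.le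
    refine this.trans (le_of_eq ?_)
    field_simp
  have s2 : ∑ k ∈ Ioc k₀ N, f k ≤ W / k₀ := by
    calc ∑ k ∈ Ioc k₀ N, f k ≤ ∑ k ∈ Ioc k₀ N, W * ((k : ℝ) ^ 2)⁻¹ :=
          sum_le_sum (fun k hk => hf k (by have := (mem_Ioc.mp hk).1; omega))
      _ = W * ∑ k ∈ Ioc k₀ N, ((k : ℝ) ^ 2)⁻¹ := by rw [mul_sum]
      _ ≤ W * ((k₀ : ℝ)⁻¹ - (N : ℝ)⁻¹) := by
          gcongr
          exact sum_Ioc_inv_sq_le_sub (by omega) (le_max_left _ _)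
      _ ≤ W * (k₀ : ℝ)⁻¹ := by
          gcongr
          have : (0 : ℝ) ≤ (N : ℝ)⁻¹ := by positivity
          linarith
      _ = W / k₀ := by rw [div_eq_mul_inv]
  have s3 : W / k₀ ≤ W / Δ := by gcongr
  calc _ ≤ W / Δ + W / Δ := by linarith
    _ = _ := by rw [hW]; ring

lemma sum_inc_le (B C M : Finset ℂ) (L : Finset (ℂ × ℂ)) (hM : ∀ ℓ ∈ L, ℓ.1 ∈ M) :
    ∑ ℓ ∈ L, (inc B C ℓ : ℝ) ≤ #M * (#B * #C) := by
  have : #(L.sigma fun ℓ => B.filter (fun b => ℓ.1 * b + ℓ.2 ∈ C)) ≤ #(M ×ˢ (B ×ˢ C)) := by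
    refine card_le_card_of_injOn (fun p => (p.1.1, (p.2, p.1.1 * p.2 + p.1.2))) ?_ ?_
    · rintro ⟨ℓ, b⟩ hp
      obtain ⟨h1, h2⟩ := mem_sigma.mp (mem_coe.mp hp)
      obtain ⟨h3, h4⟩ := mem_filter.mp h2
      exact mem_coe.mpr (mem_product.mpr ⟨hM ℓ h1, mem_product.mpr ⟨h3, h4⟩⟩)
    · rintro ⟨⟨m, s⟩, b⟩ - ⟨⟨m', s'⟩, b'⟩ - h
      simp only [Prod.mk.injEq] at h
      obtain ⟨rfl, rfl, h⟩ := h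
      have : s = s' := by linear_combination h
      subst this
      rfl
  rw [card_sigma, card_product, card_product] at this
  have h : ∑ ℓ ∈ L, inc B C ℓ ≤ #M * (#B * #C) := this
  exact_mod_cast h

lemma sum_inc_sq_le (B C M : Finset ℂ) (L : Finset (ℂ × ℂ)) (hL : ∀ ℓ ∈ L, ℓ.1 ≠ 0)
    (hM : ∀ ℓ ∈ L, ℓ.1 ∈ M) {Δ : ℝ} (hΔ : 1 ≤ Δ) :
    ∑ ℓ ∈ L, (inc B C ℓ : ℝ) ^ 2
      ≤ Δ * (#M * (#B * #C)) + 40000 * ((#B : ℝ) ^ 2 * (#C : ℝ) ^ 2) / Δ := by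
  rw [← sum_filter_not_add_sum_filter L (fun ℓ => Δ < inc B C ℓ)]
  refine add_le_add ?_ (rich_sq B C L hL hΔ)
  calc ∑ ℓ ∈ L.filter (fun ℓ => ¬ Δ < inc B C ℓ), (inc B C ℓ : ℝ) ^ 2
      ≤ ∑ ℓ ∈ L.filter (fun ℓ => ¬ Δ < inc B C ℓ), Δ * (inc B C ℓ : ℝ) := by
        refine sum_le_sum (fun ℓ hℓ => ?_)
        have := not_lt.mp (mem_filter.mp hℓ).2
        rw [sq]; gcongr
    _ ≤ ∑ ℓ ∈ L, Δ * (inc B C ℓ : ℝ) :=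
        sum_le_sum_of_subset_of_nonneg (filter_subset _ _) (fun _ _ _ => by positivity)
    _ = Δ * ∑ ℓ ∈ L, (inc B C ℓ : ℝ) := by rw [mul_sum]
    _ ≤ _ := by gcongr; exact sum_inc_le B C M L hM

/-- The second moment after the optimal choice of the threshold, with `p = √(#B * #C)` and
`q = √(#M)`, where `M` contains all the slopes. -/
lemma sum_inc_sq_le' (B C M : Finset ℂ) (L : Finset (ℂ × ℂ)) (hL : ∀ ℓ ∈ L, ℓ.1 ≠ 0)
    (hM : ∀ ℓ ∈ L, ℓ.1 ∈ M) {p q : ℝ} (hp : 0 < p) (hq : 0 < q) (hP : p ^ 2 = #B * #C)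
    (hQ : q ^ 2 = #M) :
    ∑ ℓ ∈ L, (inc B C ℓ : ℝ) ^ 2 ≤ 40001 * (q * p ^ 3 + q ^ 2 * p ^ 2) := by
  have hP4 : (#B : ℝ) ^ 2 * (#C : ℝ) ^ 2 = p ^ 4 := by
    rw [← mul_pow, ← hP]; ring
  have key : ∀ Δ : ℝ, 1 ≤ Δ → ∑ ℓ ∈ L, (inc B C ℓ : ℝ) ^ 2
      ≤ Δ * (q ^ 2 * p ^ 2) + 40000 * p ^ 4 / Δ := by
    intro Δ hΔ
    have := sum_inc_sq_le B C M L hL hM hΔ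
    rwa [hP4, ← hP, ← hQ] at this
  rcases le_total q p with h | h
  · have h1 := key (p / q) ((one_le_div hq).mpr h)
    have e : p / q * (q ^ 2 * p ^ 2) + 40000 * p ^ 4 / (p / q) = 40001 * (q * p ^ 3) := by
      field_simp; ring
    rw [e] at h1
    nlinarith [mul_pos (pow_pos hq 2) (pow_pos hp 2)]
  · have h1 := key 1 le_rfl
    have h2 : p ^ 4 ≤ q * p ^ 3 := by nlinarith [pow_pos hp 3]
    nlinarith [mul_pos (pow_pos hq 2) (pow_pos hp 2), mul_pos hq (pow_pos hp 3)]

/-! ### Lines through pairs of edges -/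

/-- The line through `(p - c, p' - c')` and `(p, p')`, for `((p, c), (p', c'))`. -/
noncomputable def quadLine (e : (ℂ × ℂ) × (ℂ × ℂ)) : ℂ × ℂ :=
  (e.2.2 / e.1.2, e.2.1 - e.2.2 / e.1.2 * e.1.1)

/-- Every pair of edges determines a line which meets both grids `X₁ × X₂` and `V₁ × V₂`. -/
lemma card_mul_card_le_sum_inc (E₁ E₂ : Finset (ℂ × ℂ)) (V₁ X₁ V₂ X₂ : Finset ℂ)
    (h₁ : ∀ e ∈ E₁, e.1 ∈ V₁ ∧ e.1 - e.2 ∈ X₁ ∧ e.2 ≠ 0)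
    (h₂ : ∀ e ∈ E₂, e.1 ∈ V₂ ∧ e.1 - e.2 ∈ X₂ ∧ e.2 ≠ 0) :
    (#E₁ * #E₂ : ℝ) ≤ ∑ ℓ ∈ (E₁ ×ˢ E₂).image quadLine,
      (inc X₁ X₂ ℓ : ℝ) * (inc V₁ V₂ ℓ : ℝ) := by
  have h : #E₁ * #E₂ ≤ ∑ ℓ ∈ (E₁ ×ˢ E₂).image quadLine, inc X₁ X₂ ℓ * inc V₁ V₂ ℓ := by
    rw [← card_product, card_eq_sum_card_image quadLine]
    refine sum_le_sum (fun ℓ _ => ?_)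
    rw [inc, inc, ← card_product]
    have hfib : ∀ p c p' c' : ℂ, (((p, c), (p', c')) : (ℂ × ℂ) × (ℂ × ℂ)) ∈
        (E₁ ×ˢ E₂).filter (fun e => quadLine e = ℓ) →
        c' = ℓ.1 * c ∧ p' = ℓ.1 * p + ℓ.2 ∧ (p, c) ∈ E₁ ∧ (p', c') ∈ E₂ := by
      intro p c p' c' he
      obtain ⟨h3, h4⟩ := mem_filter.mp he
      obtain ⟨h5, h6⟩ := mem_product.mp h3
      have hc := (h₁ _ h5).2.2
      rw [← h4]
      simp only [quadLine] at hc ⊢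
      refine ⟨by field_simp, by ring, h5, h6⟩
    refine card_le_card_of_injOn (fun e => (e.1.1 - e.1.2, e.1.1)) ?_ ?_
    · rintro ⟨⟨p, c⟩, ⟨p', c'⟩⟩ he
      obtain ⟨e1, e2, h5, h6⟩ := hfib _ _ _ _ (mem_coe.mp he)
      obtain ⟨a1, a2, -⟩ := h₁ _ h5
      obtain ⟨b1, b2, -⟩ := h₂ _ h6
      simp only at a1 a2 b1 b2
      refine mem_coe.mpr (mem_product.mpr ⟨mem_filter.mpr ⟨a2, ?_⟩, mem_filter.mpr ⟨a1, ?_⟩⟩)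
      · have : ℓ.1 * (p - c) + ℓ.2 = p' - c' := by rw [e1, e2]; ring
        simpa only [this] using b2
      · simpa only [← e2] using b1
    · rintro ⟨⟨p, c⟩, ⟨p', c'⟩⟩ he ⟨⟨r, d⟩, ⟨r', d'⟩⟩ he' h
      obtain ⟨e1, e2, -⟩ := hfib _ _ _ _ (mem_coe.mp he)
      obtain ⟨f1, f2, -⟩ := hfib _ _ _ _ (mem_coe.mp he')
      simp only [Prod.mk.injEq] at h
      obtain ⟨h1, rfl⟩ := h
      have : c = d := by linear_combination -h1
      subst this
      rw [e1, e2, f1, f2]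
  exact_mod_cast h

/-! ### The third energy -/

/-- Number of representations of `x` as a difference of two elements of `A`. -/
noncomputable def rep (A : Finset ℂ) (x : ℂ) : ℕ :=
  #((A ×ˢ A).filter (fun p => p.1 - p.2 = x))

/-- The differences with at least `τ` representations. -/
noncomputable def pop (A : Finset ℂ) (τ : ℕ) : Finset ℂ :=
  (A - A).filter (fun x => τ ≤ rep A x)

/-- The pairs in `A × A` whose difference has at least `τ` representations. -/
noncomputable def edges (A : Finset ℂ) (τ : ℕ) : Finset (ℂ × ℂ) :=
  (A ×ˢ A).filter (fun p => p.1 - p.2 ∈ pop A τ)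

lemma rep_le_card (A : Finset ℂ) (x : ℂ) : rep A x ≤ #A := by
  refine card_le_card_of_injOn Prod.fst ?_ ?_
  · intro p hp
    exact (mem_product.mp (mem_filter.mp (mem_coe.mp hp)).1).1
  · rintro ⟨a, b⟩ hp ⟨a', b'⟩ hp' h
    have h1 := (mem_filter.mp (mem_coe.mp hp)).2
    have h2 := (mem_filter.mp (mem_coe.mp hp')).2
    simp only at h1 h2 h
    subst h
    have : b = b' := by linear_combination h2 - h1
    rw [this]

lemma card_pop_mul_le (A : Finset ℂ) (τ : ℕ) : #(pop A τ) * τ ≤ #(edges A τ) := by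
  have hmaps : ∀ p ∈ edges A τ, p.1 - p.2 ∈ pop A τ := fun p hp => (mem_filter.mp hp).2
  rw [card_eq_sum_card_fiberwise hmaps, ← smul_eq_mul]
  refine card_nsmul_le_sum _ _ _ (fun x hx => ?_)
  refine (mem_filter.mp hx).2.trans (card_le_card ?_)
  intro p hp
  obtain ⟨h1, h2⟩ := mem_filter.mp hp
  exact mem_filter.mpr ⟨mem_filter.mpr ⟨h1, h2 ▸ hx⟩, h2⟩

lemma sum_inc_mul_inc_sq_le (X₁ X₂ V₁ V₂ : Finset ℂ) (L L' : Finset (ℂ × ℂ)) (hsub : L' ⊆ L) :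
    (∑ ℓ ∈ L', (inc X₁ X₂ ℓ : ℝ) * (inc V₁ V₂ ℓ : ℝ)) ^ 2 ≤
      (∑ ℓ ∈ L', (inc X₁ X₂ ℓ : ℝ) ^ 2) * ∑ ℓ ∈ L, (inc V₁ V₂ ℓ : ℝ) ^ 2 := by
  refine (sum_mul_sq_le_sq_mul_sq _ _ _).trans ?_
  refine mul_le_mul_of_nonneg_left ?_ (sum_nonneg fun _ _ => by positivity)
  exact sum_le_sum_of_subset_of_nonneg hsub (fun _ _ _ => by positivity)

/-- The bound for the number of edges when these are numerous, from the lines meeting both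
`pop A τ × pop A τ` and `A × A`. -/
lemma edges_pow_six_le (A : Finset ℂ) (h0 : (0 : ℂ) ∉ A) (τ : ℕ) {q : ℝ} (hq : 0 < q)
    (hA : 0 < #A) (hQ : q ^ 2 = #(A / A)) (hqn : q ≤ #A)
    (hG : 2 * q ^ 2 * (#A : ℝ) ^ 2 ≤ (#(edges A τ) : ℝ) ^ 2) :
    (#(edges A τ) : ℝ) ^ 6 ≤ 10 ^ 15 * (#(pop A τ) : ℝ) ^ 4 * ((#A : ℝ) ^ 5 * q ^ 3) := by
  set G : ℝ := (#(edges A τ) : ℝ) with hGdef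
  set n : ℝ := (#A : ℝ) with hn
  set X : ℝ := (#(pop A τ) : ℝ) with hX
  have hn0 : 0 < n := by rw [hn]; exact_mod_cast hA
  have hedge : ∀ e ∈ edges A τ, e.1 ∈ A ∧ e.1 - e.2 ∈ pop A τ ∧ e.2 ≠ 0 := by
    intro e he
    obtain ⟨h1, h2⟩ := mem_filter.mp he
    obtain ⟨h3, h4⟩ := mem_product.mp h1
    exact ⟨h3, h2, fun h => h0 (h ▸ h4)⟩
  have hmain := card_mul_card_le_sum_inc (edges A τ) (edges A τ) A (pop A τ) A (pop A τ)
    hedge hedge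
  set L := (edges A τ ×ˢ edges A τ).image quadLine with hLdef
  have hslope : ∀ ℓ ∈ L, ℓ.1 ≠ 0 ∧ ℓ.1 ∈ A / A := by
    intro ℓ hℓ
    obtain ⟨⟨e, e'⟩, he, rfl⟩ := mem_image.mp hℓ
    obtain ⟨h1, h2⟩ := mem_product.mp he
    refine ⟨div_ne_zero (hedge _ h2).2.2 (hedge _ h1).2.2, div_mem_div ?_ ?_⟩
    · exact (mem_product.mp (mem_filter.mp h2).1).2
    · exact (mem_product.mp (mem_filter.mp h1).1).2
  have hJ := sum_inc_sq_le' A A (A / A) L (fun ℓ h => (hslope ℓ h).1) (fun ℓ h => (hslope ℓ h).2)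
    hn0 hq (by rw [sq]) hQ
  have hG2 : 0 < G ^ 2 := lt_of_lt_of_le (by positivity) hG
  set Δ : ℝ := G ^ 2 / (2 * q ^ 2 * n ^ 2) with hΔ
  have hΔ1 : 1 ≤ Δ := (one_le_div (by positivity)).mpr hG
  have hi := rich_sq (pop A τ) (pop A τ) L (fun ℓ h => (hslope ℓ h).1) hΔ1
  have hcs := sum_inc_mul_inc_sq_le (pop A τ) (pop A τ) A A L
    (L.filter (fun ℓ => Δ < inc (pop A τ) (pop A τ) ℓ)) (filter_subset _ _)
  set U := ∑ ℓ ∈ L.filter (fun ℓ => Δ < inc (pop A τ) (pop A τ) ℓ),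
    (inc (pop A τ) (pop A τ) ℓ : ℝ) * (inc A A ℓ : ℝ) with hU
  have hlow : ∑ ℓ ∈ L.filter (fun ℓ => ¬ Δ < inc (pop A τ) (pop A τ) ℓ),
      (inc (pop A τ) (pop A τ) ℓ : ℝ) * (inc A A ℓ : ℝ) ≤ G ^ 2 / 2 := by
    calc _ ≤ ∑ ℓ ∈ L.filter (fun ℓ => ¬ Δ < inc (pop A τ) (pop A τ) ℓ), Δ * (inc A A ℓ : ℝ) := by
          refine sum_le_sum (fun ℓ hℓ => ?_)
          have := not_lt.mp (mem_filter.mp hℓ).2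
          gcongr
      _ ≤ ∑ ℓ ∈ L, Δ * (inc A A ℓ : ℝ) :=
          sum_le_sum_of_subset_of_nonneg (filter_subset _ _) (fun _ _ _ => by positivity)
      _ = Δ * ∑ ℓ ∈ L, (inc A A ℓ : ℝ) := by rw [mul_sum]
      _ ≤ Δ * (q ^ 2 * (n * n)) := by
          rw [hQ]
          gcongr
          exact sum_inc_le A A (A / A) L (fun ℓ h => (hslope ℓ h).2)
      _ = G ^ 2 / 2 := by rw [hΔ]; field_simp
  have hUlow : G ^ 2 / 2 ≤ U := by
    rw [← sum_filter_not_add_sum_filter L (fun ℓ => Δ < inc (pop A τ) (pop A τ) ℓ)] at hmain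
    nlinarith
  have hJ' : ∑ ℓ ∈ L, (inc A A ℓ : ℝ) ^ 2 ≤ 80002 * (q * n ^ 3) := by
    refine hJ.trans ?_
    have : q ^ 2 * n ^ 2 ≤ q * n ^ 3 := by
      have h : 0 < q * n ^ 2 := by positivity
      nlinarith
    linarith
  have hU2 : (G ^ 2 / 2) ^ 2 ≤ (40000 * (X ^ 2 * X ^ 2) / Δ) * (80002 * (q * n ^ 3)) := by
    calc (G ^ 2 / 2) ^ 2 ≤ U ^ 2 := by gcongr
      _ ≤ _ := hcs
      _ ≤ _ := mul_le_mul hi hJ' (sum_nonneg fun _ _ => by positivity) (by positivity)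
  have e : (40000 * (X ^ 2 * X ^ 2) / Δ) * (80002 * (q * n ^ 3))
      = (6400160000 * X ^ 4 * (n ^ 5 * q ^ 3)) / G ^ 2 := by
    rw [hΔ]; field_simp; ring
  rw [e, le_div_iff₀ hG2] at hU2
  have hpos : 0 ≤ X ^ 4 * (n ^ 5 * q ^ 3) := by positivity
  have hG6 : (G ^ 2 / 2) ^ 2 * G ^ 2 = G ^ 6 / 4 := by ring
  linarith

/-- The bound for the number of edges used when these are few, from the lines meeting both
`pop A τ × (-A)` and `A × pop A τ`. -/
lemma edges_sq_le (A : Finset ℂ) (h0 : (0 : ℂ) ∉ A) (τ : ℕ) {p q : ℝ} (hp : 0 < p) (hq : 0 < q)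
    (hQ : q ^ 2 = #(A / A)) (hP : p ^ 2 = #(pop A τ) * #A) :
    (#(edges A τ) : ℝ) ^ 2 ≤ 40001 * (q * p ^ 3 + q ^ 2 * p ^ 2) := by
  set E₂ := (edges A τ).image (fun e => (e.1 - e.2, e.1)) with hE₂
  have hcard : #E₂ = #(edges A τ) := by
    refine card_image_of_injective _ ?_
    rintro ⟨a, b⟩ ⟨a', b'⟩ h
    simp only [Prod.mk.injEq] at h
    obtain ⟨h1, rfl⟩ := h
    have : b = b' := by linear_combination -h1
    rw [this]
  have h₁ : ∀ e ∈ edges A τ, e.1 ∈ A ∧ e.1 - e.2 ∈ pop A τ ∧ e.2 ≠ 0 := by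
    intro e he
    obtain ⟨h1, h2⟩ := mem_filter.mp he
    obtain ⟨h3, h4⟩ := mem_product.mp h1
    exact ⟨h3, h2, fun h => h0 (h ▸ h4)⟩
  have h₂' : ∀ e ∈ E₂, e.1 ∈ pop A τ ∧ e.1 - e.2 ∈ -A ∧ e.2 ∈ A := by
    intro e he
    obtain ⟨⟨a, b⟩, hab, rfl⟩ := mem_image.mp he
    obtain ⟨h1, h2⟩ := mem_filter.mp hab
    obtain ⟨h3, h4⟩ := mem_product.mp h1
    refine ⟨h2, ?_, h3⟩
    simp only [sub_sub_cancel_left]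
    exact neg_mem_neg h4
  have h₂ : ∀ e ∈ E₂, e.1 ∈ pop A τ ∧ e.1 - e.2 ∈ -A ∧ e.2 ≠ 0 :=
    fun e he => ⟨(h₂' e he).1, (h₂' e he).2.1, fun h => h0 (h ▸ (h₂' e he).2.2)⟩
  have hmain := card_mul_card_le_sum_inc (edges A τ) E₂ A (pop A τ) (pop A τ) (-A) h₁ h₂
  set L := (edges A τ ×ˢ E₂).image quadLine with hLdef
  have hslope : ∀ ℓ ∈ L, ℓ.1 ≠ 0 ∧ ℓ.1 ∈ A / A := by
    intro ℓ hℓ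
    obtain ⟨⟨e, e'⟩, he, rfl⟩ := mem_image.mp hℓ
    obtain ⟨h1, h2⟩ := mem_product.mp he
    refine ⟨div_ne_zero (h₂ _ h2).2.2 (h₁ _ h1).2.2, div_mem_div ?_ ?_⟩
    · exact (h₂' _ h2).2.2
    · exact (mem_product.mp (mem_filter.mp h1).1).2
  have hi := sum_inc_sq_le' (pop A τ) (-A) (A / A) L (fun ℓ h => (hslope ℓ h).1)
    (fun ℓ h => (hslope ℓ h).2) hp hq (by rw [hP, card_neg]) hQ
  have hJ := sum_inc_sq_le' A (pop A τ) (A / A) L (fun ℓ h => (hslope ℓ h).1)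
    (fun ℓ h => (hslope ℓ h).2) hp hq (by rw [hP, mul_comm]) hQ
  have hcs := sum_inc_mul_inc_sq_le (pop A τ) (-A) A (pop A τ) L L subset_rfl
  have hR : 0 ≤ 40001 * (q * p ^ 3 + q ^ 2 * p ^ 2) := by positivity
  rw [hcard, ← sq] at hmain
  refine hmain.trans (abs_le_of_sq_le_sq' ?_ hR).2
  refine hcs.trans ?_
  rw [sq (40001 * (q * p ^ 3 + q ^ 2 * p ^ 2))]
  exact mul_le_mul hi hJ (sum_nonneg fun _ _ => by positivity) hR

/-- Bound for the number of differences with at least `τ` representations, with `q = √|A : A|`. -/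
lemma level_bound (A : Finset ℂ) (h0 : (0 : ℂ) ∉ A) (τ : ℕ) {q : ℝ} (hq : 0 < q)
    (hA : 0 < #A) (hQ : q ^ 2 = #(A / A)) (hqn : q ≤ #A) :
    (#(pop A τ) : ℝ) ^ 2 * (τ : ℝ) ^ 6 ≤ 10 ^ 15 * ((#A : ℝ) ^ 5 * q ^ 3) := by
  have hGX : (#(pop A τ) : ℝ) * τ ≤ #(edges A τ) := by exact_mod_cast card_pop_mul_le A τ
  have hsix := edges_pow_six_le A h0 τ hq hA hQ hqn
  have hsq := fun p hp => edges_sq_le A h0 τ (p := p) hp hq hQ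
  have hn0 : (0 : ℝ) < #A := by exact_mod_cast hA
  rcases (pop A τ).eq_empty_or_nonempty with hX0 | hX0
  · rw [hX0]; simp; positivity
  have hτn : (τ : ℝ) ≤ #A := by
    obtain ⟨x, hx⟩ := hX0
    exact_mod_cast (mem_filter.mp hx).2.trans (rep_le_card A x)
  have hXpos : (0 : ℝ) < #(pop A τ) := by exact_mod_cast card_pos.mpr hX0
  generalize (#(edges A τ) : ℝ) = G at *
  generalize (#(pop A τ) : ℝ) = X at *
  generalize (#A : ℝ) = n at *
  have ht0 : (0 : ℝ) ≤ τ := Nat.cast_nonneg τ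
  generalize (τ : ℝ) = t at *
  have hGX2 : (X * t) ^ 2 ≤ G ^ 2 := by gcongr
  rcases le_or_gt (2 * q ^ 2 * n ^ 2) (G ^ 2) with hG | hG
  · have h1 := hsix hG
    have h2 : (X * t) ^ 6 ≤ G ^ 6 := by gcongr
    have h3 : X ^ 4 * (X ^ 2 * t ^ 6) ≤ X ^ 4 * (10 ^ 15 * (n ^ 5 * q ^ 3)) := by
      calc _ = (X * t) ^ 6 := by ring
        _ ≤ _ := h2.trans h1
        _ = _ := by ring
    exact le_of_mul_le_mul_left h3 (by positivity)
  · have hp := Real.sqrt_pos.mpr (mul_pos hXpos hn0)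
    have hp2 : Real.sqrt (X * n) ^ 2 = X * n := Real.sq_sqrt (by positivity)
    have h1 := hsq _ hp hp2
    generalize Real.sqrt (X * n) = p at *
    rcases le_total q p with hqp | hqp
    · have h2 : (X * t) ^ 2 ≤ 80002 * (q * p ^ 3) := by
        have : q ^ 2 * p ^ 2 ≤ q * p ^ 3 := by
          have h : 0 < q * p ^ 2 := by positivity
          nlinarith
        linarith
      have h3 : X ^ 3 * (X * t ^ 4) ≤ X ^ 3 * (80002 ^ 2 * (q ^ 2 * n ^ 3)) := by
        calc _ = ((X * t) ^ 2) ^ 2 := by ring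
          _ ≤ (80002 * (q * p ^ 3)) ^ 2 := by gcongr
          _ = 80002 ^ 2 * (q ^ 2 * (p ^ 2) ^ 3) := by ring
          _ = _ := by rw [hp2]; ring
      have h4 : X * t ^ 4 ≤ 80002 ^ 2 * (q ^ 2 * n ^ 3) :=
        le_of_mul_le_mul_left h3 (by positivity)
      have h5 : (X ^ 2 * t ^ 6) ^ 3 ≤ (10 ^ 15 * (n ^ 5 * q ^ 3)) ^ 3 := by
        calc _ = (X * t) ^ 2 * (X * t ^ 4) ^ 4 := by ring
          _ ≤ (2 * q ^ 2 * n ^ 2) * (80002 ^ 2 * (q ^ 2 * n ^ 3)) ^ 4 := by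
              gcongr
              exact hGX2.trans hG.le
          _ = (2 * 80002 ^ 8) * (q ^ 9 * n ^ 14) * q := by ring
          _ ≤ (10 ^ 45) * (q ^ 9 * n ^ 14) * n := by
              gcongr
              norm_num
          _ = _ := by ring
      exact (pow_le_pow_iff_left₀ (by positivity) (by positivity) (by norm_num)).mp h5
    · have h2 : (X * t) ^ 2 ≤ 80002 * (q ^ 2 * p ^ 2) := by
        have : q * p ^ 3 ≤ q ^ 2 * p ^ 2 := by
          have h : 0 < q * p ^ 2 := by positivity
          nlinarith
        linarith
      rw [hp2] at h2
      have h3 : X * t ^ 2 ≤ 80002 * (q ^ 2 * n) := by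
        refine le_of_mul_le_mul_left (a := X) ?_ hXpos
        linarith
      calc X ^ 2 * t ^ 6 = (X * t ^ 2) ^ 2 * t ^ 2 := by ring
        _ ≤ (80002 * (q ^ 2 * n)) ^ 2 * n ^ 2 := by gcongr
        _ = 80002 ^ 2 * (q ^ 3 * n ^ 4) * q := by ring
        _ ≤ 10 ^ 15 * (q ^ 3 * n ^ 4) * n := by
            gcongr
            norm_num
        _ = _ := by ring

lemma cube_le_sum (r : ℕ) : (r : ℝ) ^ 3 ≤ ∑ k ∈ Icc 1 r, 3 * (k : ℝ) ^ 2 := by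
  induction r with
  | zero => simp
  | succ r ih =>
    rw [sum_Icc_succ_top (by omega)]
    push_cast
    have : (0 : ℝ) ≤ r := Nat.cast_nonneg r
    nlinarith

/-- The third energy `∑ rep³`, bounded by summing `level_bound` over the levels. -/
lemma third_energy_le (A : Finset ℂ) (h0 : (0 : ℂ) ∉ A) {q : ℝ} (hq : 0 < q)
    (hA : 0 < #A) (hQ : q ^ 2 = #(A / A)) (hqn : q ≤ #A) :
    (∑ x ∈ A - A, (rep A x : ℝ) ^ 3) ^ 2 ≤
      10 ^ 16 * ((#A : ℝ) ^ 5 * q ^ 3) * (1 + Real.log #A) ^ 2 := by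
  set s : ℝ := Real.sqrt (10 ^ 15 * ((#A : ℝ) ^ 5 * q ^ 3)) with hs
  have hs2 : s ^ 2 = 10 ^ 15 * ((#A : ℝ) ^ 5 * q ^ 3) := Real.sq_sqrt (by positivity)
  have hs0 : 0 ≤ s := Real.sqrt_nonneg _
  have hlog : 0 ≤ Real.log #A := Real.log_natCast_nonneg _
  have hlev : ∀ k : ℕ, (#(pop A k) : ℝ) * (k : ℝ) ^ 3 ≤ s := by
    intro k
    refine Real.le_sqrt_of_sq_le ?_
    refine le_trans (le_of_eq (by ring)) (level_bound A h0 k hq hA hQ hqn)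
  have h1 : ∑ x ∈ A - A, (rep A x : ℝ) ^ 3 ≤ ∑ k ∈ Icc 1 #A, 3 * (k : ℝ) ^ 2 * #(pop A k) := by
    calc ∑ x ∈ A - A, (rep A x : ℝ) ^ 3
        ≤ ∑ x ∈ A - A, ∑ k ∈ Icc 1 #A, if k ≤ rep A x then 3 * (k : ℝ) ^ 2 else 0 := by
          refine sum_le_sum (fun x _ => (cube_le_sum _).trans (le_of_eq ?_))
          rw [← sum_filter]
          refine sum_congr ?_ (fun _ _ => rfl)
          ext k
          have := rep_le_card A x
          simp only [mem_filter, mem_Icc]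
          omega
      _ = ∑ k ∈ Icc 1 #A, ∑ x ∈ A - A, if k ≤ rep A x then 3 * (k : ℝ) ^ 2 else 0 := sum_comm
      _ = _ := by
          refine sum_congr rfl (fun k _ => ?_)
          rw [← sum_filter, sum_const, nsmul_eq_mul, mul_comm, pop]
  have h2 : ∑ k ∈ Icc 1 #A, 3 * (k : ℝ) ^ 2 * #(pop A k) ≤ 3 * s * (1 + Real.log #A) := by
    calc _ ≤ ∑ k ∈ Icc 1 #A, 3 * s * (k : ℝ)⁻¹ := by
          refine sum_le_sum (fun k hk => ?_)
          have hk : (0 : ℝ) < k := by exact_mod_cast (mem_Icc.mp hk).1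
          rw [← div_eq_mul_inv, le_div_iff₀ hk]
          nlinarith [hlev k]
      _ = 3 * s * ∑ k ∈ Icc 1 #A, (k : ℝ)⁻¹ := by rw [mul_sum]
      _ ≤ _ := by
          gcongr
          have := harmonic_le_one_add_log #A
          rw [harmonic_eq_sum_Icc] at this
          push_cast at this
          exact this
  have h3 : 0 ≤ ∑ x ∈ A - A, (rep A x : ℝ) ^ 3 := sum_nonneg fun _ _ => by positivity
  calc _ ≤ (3 * s * (1 + Real.log #A)) ^ 2 := by
        gcongr
        exact h1.trans h2
    _ = 9 * s ^ 2 * (1 + Real.log #A) ^ 2 := by ring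
    _ ≤ _ := by
        rw [hs2]
        have : 0 ≤ ((#A : ℝ) ^ 5 * q ^ 3) * (1 + Real.log #A) ^ 2 := by positivity
        nlinarith

/-! ### The energy of a set and its difference set -/

/-- Number of `a ∈ A` with `a + y ∈ A - A`, that is, the number of representations of `y` as an
element of `(A - A) - A`. -/
noncomputable def rho (A : Finset ℂ) (y : ℂ) : ℕ :=
  #(A.filter (fun a => a + y ∈ A - A))

lemma sum_rho_le (A Y : Finset ℂ) : ∑ y ∈ Y, (rho A y : ℝ) ≤ #A * #(A - A) := by
  have : #(Y.sigma fun y => A.filter (fun a => a + y ∈ A - A)) ≤ #(A ×ˢ (A - A)) := by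
    refine card_le_card_of_injOn (fun p => (p.2, p.2 + p.1)) ?_ ?_
    · rintro ⟨y, a⟩ hp
      obtain ⟨-, h2⟩ := mem_sigma.mp (mem_coe.mp hp)
      obtain ⟨h3, h4⟩ := mem_filter.mp h2
      exact mem_coe.mpr (mem_product.mpr ⟨h3, h4⟩)
    · rintro ⟨y, a⟩ - ⟨y', a'⟩ - h
      simp only [Prod.mk.injEq] at h
      obtain ⟨rfl, h⟩ := h
      have : y = y' := by linear_combination h
      subst this
      rfl
  rw [card_sigma, card_product] at this
  have h : ∑ y ∈ Y, rho A y ≤ #A * #(A - A) := this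
  exact_mod_cast h

/-- Each of the lines `x ↦ c * x + y` with `c ∈ A` contains at least `rho A y` points of the grid
`(A / A) × (A - A)`. -/
lemma rho_le_inc (A : Finset ℂ) (h0 : (0 : ℂ) ∉ A) {c : ℂ} (hc : c ∈ A) (y : ℂ) :
    rho A y ≤ inc (A / A) (A - A) (c, y) := by
  have hc0 : c ≠ 0 := fun h => h0 (h ▸ hc)
  refine card_le_card_of_injOn (fun a => a / c) ?_ ?_
  · intro a ha
    obtain ⟨h1, h2⟩ := mem_filter.mp (mem_coe.mp ha)
    refine mem_coe.mpr (mem_filter.mpr ⟨div_mem_div h1 hc, ?_⟩)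
    simpa only [mul_div_cancel₀ a hc0] using h2
  · intro a _ b _ h
    exact (div_left_inj' hc0).mp h

/-- The additive energy of `A` and `A - A`, with `q = √|A : A|` and `κ = √|A - A|`. -/
lemma sum_rho_sq_le (A Y : Finset ℂ) (h0 : (0 : ℂ) ∉ A) (hA : 0 < #A) {q κ : ℝ} (hκ : 0 < κ)
    (hQ : q ^ 2 = #(A / A)) (hK : κ ^ 2 = #(A - A)) (hnq : (#A : ℝ) ≤ q ^ 2) (hκ1 : 1 ≤ κ) :
    ∑ y ∈ Y, (rho A y : ℝ) ^ 2 ≤ 40001 * (q ^ 2 * κ ^ 3) := by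
  have hn0 : (0 : ℝ) < #A := by exact_mod_cast hA
  have hq2 : 0 < q ^ 2 := hn0.trans_le hnq
  set Δ : ℝ := q ^ 2 * κ / #A with hΔ
  have hΔ1 : 1 ≤ Δ := by
    rw [hΔ, one_le_div hn0]
    nlinarith
  have hΔ0 : 0 < Δ := by linarith
  have hlow : ∑ y ∈ Y.filter (fun y => ¬ Δ < rho A y), (rho A y : ℝ) ^ 2 ≤ q ^ 2 * κ ^ 3 := by
    calc _ ≤ ∑ y ∈ Y.filter (fun y => ¬ Δ < rho A y), Δ * (rho A y : ℝ) := by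
          refine sum_le_sum (fun ℓ hℓ => ?_)
          have := not_lt.mp (mem_filter.mp hℓ).2
          rw [sq]; gcongr
      _ = Δ * ∑ y ∈ Y.filter (fun y => ¬ Δ < rho A y), (rho A y : ℝ) := by rw [mul_sum]
      _ ≤ Δ * (#A * κ ^ 2) := by
          rw [hK]
          gcongr
          exact sum_rho_le A _
      _ = _ := by rw [hΔ]; field_simp
  have hhigh : (#A : ℝ) * ∑ y ∈ Y.filter (fun y => Δ < rho A y), (rho A y : ℝ) ^ 2
      ≤ 40000 * ((q ^ 2) ^ 2 * (κ ^ 2) ^ 2) / Δ := by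
    have hr := rich_sq (A / A) (A - A) (A ×ˢ Y) (fun ℓ hℓ h =>
      h0 (h ▸ (mem_product.mp hℓ).1)) hΔ1
    rw [← hQ, ← hK] at hr
    refine le_trans ?_ hr
    calc (#A : ℝ) * ∑ y ∈ Y.filter (fun y => Δ < rho A y), (rho A y : ℝ) ^ 2
        = ∑ ℓ ∈ A ×ˢ Y.filter (fun y => Δ < rho A y), (rho A ℓ.2 : ℝ) ^ 2 := by
          simp only [sum_product, sum_const, nsmul_eq_mul]
      _ ≤ ∑ ℓ ∈ A ×ˢ Y.filter (fun y => Δ < rho A y), (inc (A / A) (A - A) ℓ : ℝ) ^ 2 := by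
          refine sum_le_sum (fun ℓ hℓ => ?_)
          gcongr
          exact rho_le_inc A h0 (mem_product.mp hℓ).1 ℓ.2
      _ ≤ _ := by
          refine sum_le_sum_of_subset_of_nonneg ?_ (fun _ _ _ => by positivity)
          intro ℓ hℓ
          obtain ⟨h1, h2⟩ := mem_product.mp hℓ
          obtain ⟨h3, h4⟩ := mem_filter.mp h2
          refine mem_filter.mpr ⟨mem_product.mpr ⟨h1, h3⟩, h4.trans_le ?_⟩
          exact_mod_cast rho_le_inc A h0 h1 ℓ.2
  have e : 40000 * ((q ^ 2) ^ 2 * (κ ^ 2) ^ 2) / Δ = #A * (40000 * (q ^ 2 * κ ^ 3)) := by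
    have hq0 : q ≠ 0 := fun h => by rw [h] at hq2; norm_num at hq2
    rw [hΔ]; field_simp
  rw [e] at hhigh
  have hhigh' := le_of_mul_le_mul_left hhigh hn0
  rw [← sum_filter_not_add_sum_filter Y (fun y => Δ < rho A y)]
  linarith

/-! ### Popular differences and the combination of the two energies -/

/-- Cauchy–Schwarz: few collisions force a large image. -/
lemma card_sq_le_image_mul {α β : Type*} [DecidableEq β] (T : Finset α) (φ : α → β) :
    #T ^ 2 ≤ #(T.image φ) * #((T ×ˢ T).filter (fun t => φ t.1 = φ t.2)) := by
  have h1 : #((T ×ˢ T).filter (fun t => φ t.1 = φ t.2))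
      = ∑ i ∈ T.image φ, #(T.filter (fun t => φ t = i)) ^ 2 := by
    rw [card_eq_sum_card_fiberwise (f := fun t => φ t.1) (t := T.image φ)]
    · refine sum_congr rfl (fun i _ => ?_)
      rw [sq, ← card_product]
      congr 1
      ext ⟨s, t⟩
      simp only [mem_filter, mem_product]
      constructor
      · rintro ⟨⟨⟨h1, h2⟩, h3⟩, h4⟩
        exact ⟨⟨h1, h4⟩, h2, h3 ▸ h4⟩
      · rintro ⟨⟨h1, h2⟩, h3, h4⟩
        exact ⟨⟨⟨h1, h3⟩, h2.trans h4.symm⟩, h2⟩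
    · intro t ht
      exact mem_coe.mpr (mem_image_of_mem _ (mem_product.mp (mem_filter.mp (mem_coe.mp ht)).1).1)
  rw [h1, card_eq_sum_card_image φ T]
  exact sq_sum_le_card_mul_sum_sq

/-- The pairs in `A × A` whose difference has at least half the average number of
representations. -/
noncomputable def popPairs (A : Finset ℂ) : Finset (ℂ × ℂ) :=
  (A ×ˢ A).filter (fun p => #A ^ 2 ≤ 2 * #(A - A) * rep A (p.1 - p.2))

lemma card_sq_le_popPairs (A : Finset ℂ) (hA : 0 < #A) : #A ^ 2 ≤ 2 * #(popPairs A) := by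
  have hK : 0 < #(A - A) := by
    obtain ⟨a, ha⟩ := card_pos.mp hA
    exact card_pos.mpr ⟨a - a, sub_mem_sub ha ha⟩
  set U := (A ×ˢ A).filter (fun p => ¬ #A ^ 2 ≤ 2 * #(A - A) * rep A (p.1 - p.2)) with hU
  have hsplit : #(popPairs A) + #U = #A ^ 2 := by
    rw [popPairs, hU, card_filter_add_card_filter_not, card_product, sq]
  have hUle : 2 * #(A - A) * #U ≤ #(A - A) * #A ^ 2 := by
    have hmaps : ∀ p ∈ U, p.1 - p.2 ∈ A - A := fun p hp => by
      obtain ⟨h1, h2⟩ := mem_product.mp (mem_filter.mp hp).1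
      exact sub_mem_sub h1 h2
    rw [card_eq_sum_card_fiberwise hmaps, mul_sum, ← smul_eq_mul (a := #(A - A)) (b := #A ^ 2)]
    refine sum_le_card_nsmul _ _ _ (fun x _ => ?_)
    rcases (U.filter (fun p => p.1 - p.2 = x)).eq_empty_or_nonempty with h | ⟨p, hp⟩
    · rw [h]; simp
    · obtain ⟨h1, rfl⟩ := mem_filter.mp hp
      have h2 := (mem_filter.mp h1).2
      refine le_trans (Nat.mul_le_mul_left _ (card_le_card ?_)) (not_le.mp h2).le
      intro r hr
      obtain ⟨h3, h4⟩ := mem_filter.mp hr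
      exact mem_filter.mpr ⟨(mem_filter.mp h3).1, h4⟩
  have : #(A - A) * (2 * #U) ≤ #(A - A) * #A ^ 2 := by linarith
  have := Nat.le_of_mul_le_mul_left this hK
  omega

/-- The map `(a, (c', c)) ↦ (a - c, a - c')`. -/
noncomputable def diffMap (t : ℂ × (ℂ × ℂ)) : ℂ × ℂ := (t.1 - t.2.2, t.1 - t.2.1)

lemma collisions_le (A : Finset ℂ) :
    #(((A ×ˢ popPairs A) ×ˢ (A ×ˢ popPairs A)).filter (fun t => diffMap t.1 = diffMap t.2))
      ≤ ∑ x ∈ A - A, rep A x ^ 3 := by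
  have e : ∑ x ∈ A - A, rep A x ^ 3 = #((A - A).sigma fun x =>
      (A ×ˢ A).filter (fun p => p.1 - p.2 = x) ×ˢ ((A ×ˢ A).filter (fun p => p.1 - p.2 = x) ×ˢ
        (A ×ˢ A).filter (fun p => p.1 - p.2 = x))) := by
    rw [card_sigma]
    refine sum_congr rfl (fun x _ => ?_)
    rw [card_product, card_product, rep]; ring
  rw [e]
  refine card_le_card_of_injOn (fun t => ⟨t.1.1 - t.2.1,
    ((t.1.1, t.2.1), ((t.1.2.1, t.2.2.1), (t.1.2.2, t.2.2.2)))⟩) ?_ ?_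
  · rintro ⟨⟨a, c', c⟩, ⟨b, d', d⟩⟩ ht
    simp only [coe_filter, mem_product, Set.mem_ofPred_eq, popPairs, mem_filter, diffMap,
      Prod.mk.injEq] at ht
    obtain ⟨⟨⟨ha, ⟨hc', hc⟩, -⟩, hb, ⟨hd', hd⟩, -⟩, e1, e2⟩ := ht
    simp only [coe_sigma, Set.mem_sigma_iff, mem_coe, mem_product, mem_filter]
    refine ⟨sub_mem_sub ha hb, ⟨⟨ha, hb⟩, trivial⟩, ⟨⟨hc', hd'⟩, ?_⟩, ⟨hc, hd⟩, ?_⟩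
    · linear_combination -e2
    · linear_combination -e1
  · rintro ⟨⟨a, c', c⟩, ⟨b, d', d⟩⟩ - ⟨⟨a₁, c₁', c₁⟩, ⟨b₁, d₁', d₁⟩⟩ - h
    rw [Sigma.mk.injEq] at h
    have h2 := eq_of_heq h.2
    simp only [Prod.mk.injEq] at h2
    obtain ⟨⟨rfl, rfl⟩, ⟨rfl, rfl⟩, rfl, rfl⟩ := h2
    rfl

lemma image_le (A : Finset ℂ) :
    #((A ×ˢ popPairs A).image diffMap) * #A ^ 2
      ≤ 2 * #(A - A) * ∑ y ∈ (A - A) - A, rho A y ^ 2 := by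
  set I := (A ×ˢ popPairs A).image diffMap with hI
  have hI' : ∀ d ∈ I, d.1 ∈ A - A ∧ d.2 ∈ A - A ∧ #A ^ 2 ≤ 2 * #(A - A) * rep A (d.1 - d.2) := by
    intro d hd
    obtain ⟨⟨a, c', c⟩, ht, rfl⟩ := mem_image.mp hd
    obtain ⟨ha, hp⟩ := mem_product.mp ht
    obtain ⟨hc, hr⟩ := mem_filter.mp hp
    obtain ⟨hc', hc⟩ := mem_product.mp hc
    refine ⟨sub_mem_sub ha hc, sub_mem_sub ha hc', ?_⟩
    simpa only [diffMap, sub_sub_sub_cancel_left] using hr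
  have h1 : ∑ d ∈ I, rep A (d.1 - d.2) ≤ ∑ y ∈ (A - A) - A, rho A y ^ 2 := by
    have e1 : ∑ d ∈ I, rep A (d.1 - d.2) = #(I.sigma fun d =>
        (A ×ˢ A).filter (fun p => p.1 - p.2 = d.1 - d.2)) := by
      rw [card_sigma]; rfl
    have e2 : ∑ y ∈ (A - A) - A, rho A y ^ 2 = #(((A - A) - A).sigma fun y =>
        A.filter (fun a => a + y ∈ A - A) ×ˢ A.filter (fun a => a + y ∈ A - A)) := by
      rw [card_sigma]
      refine sum_congr rfl (fun y _ => ?_)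
      rw [card_product, sq, rho]
    rw [e1, e2]
    refine card_le_card_of_injOn (fun t => ⟨t.1.1 - t.2.1, t.2⟩) ?_ ?_
    · rintro ⟨⟨d, d'⟩, e, e'⟩ ht
      obtain ⟨h1, h2⟩ := mem_sigma.mp (mem_coe.mp ht)
      obtain ⟨h3, h4⟩ := mem_filter.mp h2
      obtain ⟨h5, h6⟩ := mem_product.mp h3
      obtain ⟨h7, h8, -⟩ := hI' _ h1
      simp only at h4 h5 h6 h7 h8
      refine mem_coe.mpr (mem_sigma.mpr ⟨sub_mem_sub h7 h5, mem_product.mpr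
        ⟨mem_filter.mpr ⟨h5, ?_⟩, mem_filter.mpr ⟨h6, ?_⟩⟩⟩)
      · have : e + (d - e) = d := by ring
        simpa only [this] using h7
      · have : e' + (d - e) = d' := by linear_combination -h4
        simpa only [this] using h8
    · rintro ⟨⟨d, d'⟩, e, e'⟩ ht ⟨⟨f, f'⟩, g, g'⟩ ht' h
      have h4 := (mem_filter.mp (mem_sigma.mp (mem_coe.mp ht)).2).2
      have h4' := (mem_filter.mp (mem_sigma.mp (mem_coe.mp ht')).2).2
      rw [Sigma.mk.injEq] at h
      obtain ⟨h1, h2⟩ := h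
      have h2 := eq_of_heq h2
      simp only [Prod.mk.injEq] at h1 h2 h4 h4'
      obtain ⟨rfl, rfl⟩ := h2
      have : d = f := by linear_combination h1
      subst this
      have : d' = f' := by linear_combination h4 - h4'
      subst this
      rfl
  calc #I * #A ^ 2 ≤ ∑ d ∈ I, 2 * #(A - A) * rep A (d.1 - d.2) := by
        rw [← smul_eq_mul]
        exact card_nsmul_le_sum _ _ _ (fun d hd => (hI' d hd).2.2)
    _ = 2 * #(A - A) * ∑ d ∈ I, rep A (d.1 - d.2) := by rw [mul_sum]
    _ ≤ _ := Nat.mul_le_mul_left _ h1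

/-- The inequality relating the difference set, the third energy of `A`, and the additive energy
of `A` and `A - A`. -/
lemma card_pow_eight_le (A : Finset ℂ) (hA : 0 < #A) :
    #A ^ 8 ≤ 8 * #(A - A) * (∑ x ∈ A - A, rep A x ^ 3) * ∑ y ∈ (A - A) - A, rho A y ^ 2 := by
  have h1 := card_sq_le_image_mul (A ×ˢ popPairs A) diffMap
  have h2 := collisions_le A
  have h3 := image_le A
  have h4 := card_sq_le_popPairs A hA
  rw [card_product] at h1
  set I := #((A ×ˢ popPairs A).image diffMap)
  set P := #(popPairs A)
  set E := ∑ x ∈ A - A, rep A x ^ 3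
  set F := ∑ y ∈ (A - A) - A, rho A y ^ 2
  calc #A ^ 8 = #A ^ 2 * #A ^ 2 * (#A ^ 2) ^ 2 := by ring
    _ ≤ #A ^ 2 * #A ^ 2 * (2 * P) ^ 2 := by gcongr
    _ = 4 * #A ^ 2 * (#A * P) ^ 2 := by ring
    _ ≤ 4 * #A ^ 2 * (I * E) := by
        gcongr
        exact h1.trans (Nat.mul_le_mul_left _ h2)
    _ = 4 * E * (I * #A ^ 2) := by ring
    _ ≤ 4 * E * (2 * #(A - A) * F) := by gcongr
    _ = _ := by ring

/-! ### Conclusion -/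

/-- The polynomial form of the bound. -/
lemma card_pow_le (A : Finset ℂ) (h0 : (0 : ℂ) ∉ A) (hA : 0 < #A) :
    (#A : ℝ) ^ 22 ≤ 10 ^ 56 * ((#(A - A) : ℝ) + #(A / A)) ^ 17 * (1 + Real.log #A) ^ 4 := by
  have hne : A.Nonempty := card_pos.mp hA
  obtain ⟨a₀, ha₀⟩ := hne
  have ha₀0 : a₀ ≠ 0 := fun h => h0 (h ▸ ha₀)
  have hn0 : (0 : ℝ) < #A := by exact_mod_cast hA
  have hQn : (#A : ℝ) ≤ #(A / A) := by
    have : #A ≤ #(A / A) := card_le_card_of_injOn (fun a => a / a₀)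
      (fun a ha => mem_coe.mpr (div_mem_div (mem_coe.mp ha) ha₀))
      (fun a _ b _ h => (div_left_inj' ha₀0).mp h)
    exact_mod_cast this
  have hQ2 : (#(A / A) : ℝ) ≤ (#A : ℝ) ^ 2 := by
    have : #(A / A) ≤ #A * #A := card_div_le
    rw [sq]; exact_mod_cast this
  have hK1 : (1 : ℝ) ≤ #(A - A) := by
    have : 1 ≤ #(A - A) := card_pos.mpr ⟨a₀ - a₀, sub_mem_sub ha₀ ha₀⟩
    exact_mod_cast this
  have h8 : (#A : ℝ) ^ 8 ≤ 8 * #(A - A) * (∑ x ∈ A - A, (rep A x : ℝ) ^ 3) *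
      ∑ y ∈ (A - A) - A, (rho A y : ℝ) ^ 2 := by exact_mod_cast card_pow_eight_le A hA
  set Q : ℝ := (#(A / A) : ℝ) with hQdef
  set K : ℝ := (#(A - A) : ℝ) with hKdef
  have hQpos : 0 < Q := hn0.trans_le hQn
  have hq : 0 < Real.sqrt Q := Real.sqrt_pos.mpr hQpos
  have hq2 : Real.sqrt Q ^ 2 = Q := Real.sq_sqrt hQpos.le
  have hκ2 : Real.sqrt K ^ 2 = K := Real.sq_sqrt (by linarith)
  have hκ1 : 1 ≤ Real.sqrt K := Real.one_le_sqrt.mpr hK1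
  have hqn : Real.sqrt Q ≤ #A := Real.sqrt_le_iff.mpr ⟨hn0.le, hQ2⟩
  have hE := third_energy_le A h0 hq hA hq2 hqn
  have hF := sum_rho_sq_le A ((A - A) - A) h0 hA (by linarith) hq2 hκ2 (hQn.trans hq2.ge) hκ1
  have hE0 : 0 ≤ ∑ x ∈ A - A, (rep A x : ℝ) ^ 3 := sum_nonneg fun _ _ => by positivity
  have hF0 : 0 ≤ ∑ y ∈ (A - A) - A, (rho A y : ℝ) ^ 2 := sum_nonneg fun _ _ => by positivity
  generalize (∑ x ∈ A - A, (rep A x : ℝ) ^ 3) = E at *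
  generalize (∑ y ∈ (A - A) - A, (rho A y : ℝ) ^ 2) = F at *
  generalize Real.sqrt Q = q at *
  generalize Real.sqrt K = κ at *
  have hl0 : 0 ≤ 1 + Real.log #A := by
    have := Real.log_natCast_nonneg #A
    linarith
  generalize 1 + Real.log (#A : ℝ) = l at *
  generalize (#A : ℝ) = n at *
  have h16 : n ^ 5 * n ^ 11 ≤ n ^ 5 * (10 ^ 28 * (κ ^ 10 * q ^ 7 * l ^ 2)) := by
    calc n ^ 5 * n ^ 11 = (n ^ 8) ^ 2 := by ring
      _ ≤ (8 * K * E * F) ^ 2 := by gcongr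
      _ = 64 * K ^ 2 * E ^ 2 * F ^ 2 := by ring
      _ ≤ 64 * K ^ 2 * (10 ^ 16 * (n ^ 5 * q ^ 3) * l ^ 2) * (40001 * (q ^ 2 * κ ^ 3)) ^ 2 := by
          gcongr
      _ = (64 * 10 ^ 16 * 40001 ^ 2) * (n ^ 5 * (κ ^ 10 * q ^ 7 * l ^ 2)) := by
          rw [← hκ2]; ring
      _ ≤ 10 ^ 28 * (n ^ 5 * (κ ^ 10 * q ^ 7 * l ^ 2)) := by
          gcongr
          norm_num
      _ = _ := by ring
  have h11 := le_of_mul_le_mul_left h16 (by positivity)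
  calc n ^ 22 = (n ^ 11) ^ 2 := by ring
    _ ≤ (10 ^ 28 * (κ ^ 10 * q ^ 7 * l ^ 2)) ^ 2 := by gcongr
    _ = 10 ^ 56 * ((κ ^ 2) ^ 10 * (q ^ 2) ^ 7) * l ^ 4 := by ring
    _ = 10 ^ 56 * (K ^ 10 * Q ^ 7) * l ^ 4 := by rw [hκ2, hq2]
    _ ≤ 10 ^ 56 * ((K + Q) ^ 10 * (K + Q) ^ 7) * l ^ 4 := by
        gcongr <;> linarith
    _ = _ := by ring

/-- Absorbs the logarithm: `m` stands for a small multiple of `log n`. -/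
lemma absorb_log {n S m : ℝ} (hn : 0 < n) (hS : 0 ≤ S)
    (h : n ^ 22 ≤ S ^ 17 * m ^ 4) (hmn : m ^ 28 ≤ n) : n ^ 40 ≤ S ^ 31 * m ^ 4 := by
  have h1 : n ^ 2 * (n ^ 40) ^ 17 ≤ n ^ 2 * (S ^ 31 * m ^ 4) ^ 17 := by
    calc n ^ 2 * (n ^ 40) ^ 17 = (n ^ 22) ^ 31 := by ring
      _ ≤ (S ^ 17 * m ^ 4) ^ 31 := by gcongr
      _ = (S ^ 31 * m ^ 4) ^ 17 * (m ^ 28) ^ 2 := by ring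
      _ ≤ (S ^ 31 * m ^ 4) ^ 17 * n ^ 2 := by gcongr
      _ = _ := by ring
  have h2 := le_of_mul_le_mul_left h1 (by positivity)
  exact (pow_le_pow_iff_left₀ (by positivity) (by positivity) (by norm_num)).mp h2

theorem diff_ratio_bound :
    ∃ c : ℝ, 0 < c ∧ ∀ A : Finset ℂ, (0 : ℂ) ∉ A → 2 ≤ A.card →
      c * (A.card : ℝ) ^ ((40 : ℝ) / 31) / (Real.log (A.card : ℝ)) ^ ((4 : ℝ) / 31) ≤
        ((A - A).card : ℝ) + ((A / A).card : ℝ) := by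
  refine ⟨1 / 10 ^ 4, by positivity, fun A h0 h2 => ?_⟩
  have hmain := card_pow_le A h0 (by omega)
  have hn2 : (2 : ℝ) ≤ #A := by exact_mod_cast h2
  have hS0 : (0 : ℝ) ≤ (#(A - A) : ℝ) + #(A / A) := by positivity
  set S : ℝ := (#(A - A) : ℝ) + #(A / A) with hS
  set n : ℝ := (#A : ℝ) with hn
  have hn0 : 0 < n := by linarith
  have hl : 1 / 2 ≤ Real.log n := by
    have h1 := Real.log_two_gt_d9
    have h3 := Real.log_le_log (by norm_num) hn2
    linarith
  have hlog : Real.log n ≤ 28 * n ^ ((1 : ℝ) / 28) := by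
    have := Real.log_le_rpow_div hn0.le (show (0 : ℝ) < 1 / 28 by norm_num)
    linarith
  set l : ℝ := Real.log n with hldef
  have hl0 : 0 < l := by linarith
  have hmn : (l / 28) ^ 28 ≤ n := by
    calc (l / 28) ^ 28 ≤ (n ^ ((1 : ℝ) / 28)) ^ 28 := by
          gcongr
          linarith
      _ = n := by
          rw [← Real.rpow_natCast, ← Real.rpow_mul hn0.le]
          norm_num
  have h22 : n ^ 22 ≤ (10 ^ 4 * S) ^ 17 * (l / 28) ^ 4 := by
    calc n ^ 22 ≤ 10 ^ 56 * S ^ 17 * (1 + l) ^ 4 := hmain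
      _ ≤ 10 ^ 56 * S ^ 17 * (3 * l) ^ 4 := by
          have h3 : (1 + l) ^ 4 ≤ (3 * l) ^ 4 := by
            gcongr
            linarith
          exact mul_le_mul_of_nonneg_left h3 (mul_nonneg (by norm_num) (pow_nonneg hS0 17))
      _ = (10 ^ 56 * 84 ^ 4) * (S ^ 17 * (l / 28) ^ 4) := by ring
      _ ≤ 10 ^ 68 * (S ^ 17 * (l / 28) ^ 4) := by
          gcongr
          norm_num
      _ = _ := by ring
  have h40 := absorb_log hn0 (by positivity) h22 hmn
  have h40' : n ^ 40 ≤ (10 ^ 4 * S) ^ 31 * l ^ 4 := by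
    refine h40.trans ?_
    gcongr
    linarith
  have hfin : n ^ ((40 : ℝ) / 31) ≤ 10 ^ 4 * S * l ^ ((4 : ℝ) / 31) := by
    have e1 : (n ^ ((40 : ℝ) / 31)) ^ 31 = n ^ 40 := by
      rw [← Real.rpow_natCast, ← Real.rpow_mul hn0.le, ← Real.rpow_natCast]
      norm_num
    have e2 : (l ^ ((4 : ℝ) / 31)) ^ 31 = l ^ 4 := by
      rw [← Real.rpow_natCast, ← Real.rpow_mul hl0.le, ← Real.rpow_natCast]
      norm_num
    refine (pow_le_pow_iff_left₀ (by positivity) (by positivity) (show 31 ≠ 0 by norm_num)).mp ?_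
    rw [e1, mul_pow, e2]
    exact h40'
  rw [div_le_iff₀ (by positivity)]
  linarith
end

section
/- For every ε > 0, the meniscus M_ε = {u/(1+u) : u ∈ W_ε} is equal to the intersection of the two open disks in ℂ centered at 1/2 + i/(2ε) and at 1/2 − i/(2ε), each of radius √(1/4 + 1/(4ε²)). -/
/-!
The inverse of `u ↦ u / (1 + u)` is `w ↦ w / (1 - w)`, and for `w = x + i y`, `w ≠ 1`,
`w / (1 - w) = ((x - x² - y²) + i y) / |1 - w|²`. Hence `w / (1 - w)` lies in the wedge exactly when
`|y| < ε (x - x² - y²)` (`div_one_sub_mem_wedge_iff`). Expanding the square of the distance to the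
centres, the constant terms cancel against the squared radius, and the two disk conditions read
`x² + y² - x < ± y / ε`, which together are the same inequality (`mem_inter_balls_iff`).
-/

/-- The open wedge `W_ε = {z : Re z > 0, |Im z| < ε · Re z}`. -/
def wedge (ε : ℝ) : Set ℂ := {z : ℂ | 0 < z.re ∧ |z.im| < ε * z.re}

/-- The meniscus `M_ε`, the image of the wedge under the Möbius map `z ↦ z/(1+z)`. -/
def meniscus (ε : ℝ) : Set ℂ := (fun u : ℂ => u / (1 + u)) '' wedge ε

lemma mem_inter_balls_iff {ε : ℝ} (hε : 0 < ε) (w : ℂ) :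
    w ∈ Metric.ball ((1 / 2 : ℂ) + Complex.I / (2 * (ε : ℂ)))
          (Real.sqrt (1 / 4 + 1 / (4 * ε ^ 2))) ∩
        Metric.ball ((1 / 2 : ℂ) - Complex.I / (2 * (ε : ℂ)))
          (Real.sqrt (1 / 4 + 1 / (4 * ε ^ 2))) ↔
      |w.im| < ε * (w.re - w.re ^ 2 - w.im ^ 2) := by
  have hc : Complex.I / (2 * (ε : ℂ)) = ((1 / (2 * ε) : ℝ) : ℂ) * Complex.I := by
    push_cast
    ring
  have hhalf : (1 / 2 : ℂ) = ((1 / 2 : ℝ) : ℂ) := by push_cast; rfl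
  rw [Set.mem_inter_iff, Metric.mem_ball, Metric.mem_ball, Complex.dist_eq, Complex.dist_eq,
    Real.lt_sqrt (norm_nonneg _), Real.lt_sqrt (norm_nonneg _), Complex.sq_norm, Complex.sq_norm,
    Complex.normSq_apply, Complex.normSq_apply, hc, hhalf, abs_lt]
  simp only [Complex.sub_re, Complex.sub_im, Complex.add_re, Complex.add_im, Complex.ofReal_re,
    Complex.ofReal_im, Complex.re_ofReal_mul, Complex.im_ofReal_mul, Complex.I_re, Complex.I_im]
  obtain ⟨x, y⟩ := w
  have hinv : ε * (1 / (2 * ε)) = 1 / 2 := by field_simp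
  have hsq : 1 / (4 * ε ^ 2) = (1 / (2 * ε)) ^ 2 := by field_simp; norm_num
  rw [hsq]
  generalize 1 / (2 * ε) = d at hinv
  -- The disk conditions, multiplied by `ε`.
  have h1 : ε * ((x - (1 / 2 + d * 0)) * (x - (1 / 2 + d * 0)) + (y - (0 + d * 1)) *
      (y - (0 + d * 1)) - (1 / 4 + d ^ 2)) = -(ε * (x - x ^ 2 - y ^ 2)) - y := by
    linear_combination (-2 * y) * hinv
  have h2 : ε * ((x - (1 / 2 - d * 0)) * (x - (1 / 2 - d * 0)) + (y - (0 - d * 1)) *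
      (y - (0 - d * 1)) - (1 / 4 + d ^ 2)) = y - ε * (x - x ^ 2 - y ^ 2) := by
    linear_combination (2 * y) * hinv
  have hmul (a : ℝ) : ε * a < 0 ↔ a < 0 :=
    ⟨fun h => neg_of_mul_neg_right h hε.le, fun h => mul_neg_of_pos_of_neg hε h⟩
  refine and_congr ?_ ?_
  · rw [← sub_neg, ← hmul, h1, sub_neg]
  · rw [← sub_neg, ← hmul, h2, sub_neg]

lemma div_one_sub_mem_wedge_iff {ε : ℝ} (hε : 0 < ε) {w : ℂ} (hw : w ≠ 1) :
    w / (1 - w) ∈ wedge ε ↔ |w.im| < ε * (w.re - w.re ^ 2 - w.im ^ 2) := by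
  have hN : 0 < Complex.normSq (1 - w) := Complex.normSq_pos.2 (sub_ne_zero.2 hw.symm)
  have hre : (w / (1 - w)).re = (w.re - w.re ^ 2 - w.im ^ 2) / Complex.normSq (1 - w) := by
    rw [Complex.div_re]
    simp only [Complex.sub_re, Complex.sub_im, Complex.one_re, Complex.one_im]
    ring
  have him : (w / (1 - w)).im = w.im / Complex.normSq (1 - w) := by
    rw [Complex.div_im]
    simp only [Complex.sub_re, Complex.sub_im, Complex.one_re, Complex.one_im]
    ring
  rw [wedge, Set.mem_ofPred_eq, hre, him, abs_div, abs_of_pos hN, ← mul_div_assoc,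
    div_lt_div_iff_of_pos_right hN, and_iff_right_iff_imp]
  intro h
  exact div_pos (pos_of_mul_pos_right ((abs_nonneg _).trans_lt h) hε.le) hN

theorem meniscus_eq_inter_balls (ε : ℝ) (hε : 0 < ε) :
    meniscus ε =
      Metric.ball ((1 / 2 : ℂ) + Complex.I / (2 * (ε : ℂ))) (Real.sqrt (1 / 4 + 1 / (4 * ε ^ 2))) ∩
      Metric.ball ((1 / 2 : ℂ) - Complex.I / (2 * (ε : ℂ))) (Real.sqrt (1 / 4 + 1 / (4 * ε ^ 2))) := by
  ext w
  rw [mem_inter_balls_iff hε]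
  constructor
  · rintro ⟨u, hu, rfl⟩
    have h1 : 1 + u ≠ 0 := by
      intro h
      have := congrArg Complex.re h
      simp only [Complex.add_re, Complex.one_re, Complex.zero_re] at this
      linarith [hu.1]
    have hsub : 1 - u / (1 + u) = 1 / (1 + u) := by field_simp; ring
    have hne : u / (1 + u) ≠ 1 := by
      intro h
      rw [h, sub_self] at hsub
      exact one_div_ne_zero h1 hsub.symm
    refine (div_one_sub_mem_wedge_iff hε hne).1 ?_
    rw [hsub]
    convert hu using 1
    field_simp
  · intro h
    have hne : w ≠ 1 := by
      rintro rfl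
      simp at h
    refine ⟨w / (1 - w), (div_one_sub_mem_wedge_iff hε hne).2 h, ?_⟩
    have h1 : 1 - w ≠ 0 := sub_ne_zero.2 hne.symm
    have hadd : 1 + w / (1 - w) = 1 / (1 - w) := by field_simp; ring
    simp only [hadd]
    field_simp
end
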